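/- (Katz) Let q be a prime power, K an algebraically closed field containing the field with q elements, and for each l ≥ 1 set 𝔽_{q^l} = {x ∈ K : x^{q^l} = x}, the subfield of K with q^l elements. Let Z ⊆ K^n be a constructible set defined over 𝔽_q. Suppose there exists a polynomial P ∈ ℂ[x] such that for every integer l ≥ 1 the number of points of Z with all coordinates in 𝔽_{q^l}, i.e. |Z ∩ (𝔽_{q^l})^n|, equals P(q^l). Then P has integer coefficients: P ∈ ℤ[x]. -/

import Mathlib

/-!
# Integrality of counting polynomials

Write `N l` for the number of points of `Z` over the field with `q ^ l` elements, `q = p ^ a`. The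
idea is to combine Dwork's theorem, that the zeta function `exp (∑ N l X ^ l / l)` is a quotient of
two entire power series over `ℂ_[p]`, with the following observation. If `N l = P (q ^ l)` with
`P = ∑ c_i x ^ i`, then `P` has rational coefficients by interpolation (`exists_rat`), and the zeta
function is formally `∏ (1 - q ^ i X) ^ (-c_i)`. Its logarithmic derivative has a simple pole at
`q ^ (-i)` with residue `-c_i`; but the residues of the logarithmic derivative of a meromorphic
function are integers (`Mero.exists_int`). Full rationality of the zeta function is not needed, and
neither is any `ℓ`-adic cohomology.

Meromorphy (`card_mero`) follows Dwork.

* Fix `π` with `π ^ (p - 1) = -p`. The splitting function `θ(X) = exp (π (X - X ^ p))` converges on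
  a disc of radius larger than `1` (`theta_bdAt`). This is deduced from the integrality of the
  Artin–Hasse exponential (`norm_coeff_artinHasse`), of which `θ(X)` is, up to factors close to `1`,
  the value at `π X`. The products `∏_{i < m} θ(t ^ (p ^ i))` at Teichmüller representatives `t`
  form a nontrivial additive character of the field with `p ^ m` elements (`chi_add`,
  `exists_chi_ne_one`, `sum_chi_mul`).
* An exponential sum of a polynomial over the points of a torus is therefore a sum of
  `Φ(x) Φ(x ^ q) ⋯ Φ(x ^ (q ^ (l - 1)))` over the `(q ^ l - 1)`-th roots of unity, with `Φ` a product
  of values of `θ` at monomials. By Dwork's trace formula (`trace_dworkMat_pow`,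
  `sum_eval_nthRoots`) this sum is `(q ^ l - 1) ^ n` times the trace of the `l`-th power of an
  operator. Its characteristic series is entire because the Leibniz expansion admits bounds
  independent of the truncation (`detS_bdAt`). All this is carried out for polynomial truncations
  of `Φ`, where the operators are finite matrices, and then one passes to the limit coefficientwise
  (`mero_of_tendsto`, `torusSum_mero`).
* Affine space is a disjoint union of tori, and by orthogonality the number of common zeros of
  `f_1, …, f_r` is `q ^ (-l r)` times the exponential sum of `∑ y_j f_j(x)` (`count_mero`). The
  indicator function of a constructible set is a combination with integer coefficients of indicator
  functions of closed sets (`goodMul_indZ`).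
-/

namespace KatzDwork

/-! ### Exponentials of formal power series -/

open PowerSeries in
/-- The exponential `exp (f - f(0))` of a formal power series `f`. The constant term of `f` is
discarded, so that the definition makes sense for every `f`. -/
noncomputable def Ex {L : Type*} [Field L] [CharZero L] (f : PowerSeries L) : PowerSeries L :=
  (PowerSeries.exp L).subst (f - C (constantCoeff f))

section Ex
open PowerSeries
variable {L : Type*} [Field L] [CharZero L]
set_option linter.unusedSectionVars false

lemma hasSubst_sub_const (f : PowerSeries L) : HasSubst (f - C (constantCoeff f)) :=
  HasSubst.of_constantCoeff_zero' (by simp)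

lemma derivative_Ex (f : PowerSeries L) : d⁄dX L (Ex f) = d⁄dX L f * Ex f := by
  rw [Ex, derivative_subst (hasSubst_sub_const f), derivative_exp]
  simp [mul_comm]

lemma constantCoeff_Ex (f : PowerSeries L) : constantCoeff (Ex f) = 1 := by
  have h := constantCoeff_subst (hasSubst_sub_const f) (PowerSeries.exp L)
  rw [finsum_eq_single _ 0] at h
  · have h2 : MvPowerSeries.constantCoeff (Ex f) = 1 := by
      rw [Ex, h]; simp
    exact h2
  · intro d hd
    have : MvPowerSeries.constantCoeff ((f - C (constantCoeff f)) ^ d) = (0 : L) := by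
      rw [map_pow]
      have : MvPowerSeries.constantCoeff (f - C (constantCoeff f)) = (0 : L) := by
        change constantCoeff (f - C (constantCoeff f)) = 0
        simp
      rw [this, zero_pow hd]
    rw [this, smul_zero]

lemma coeff_zero_Ex (f : PowerSeries L) : coeff 0 (Ex f) = 1 := by
  rw [coeff_zero_eq_constantCoeff_apply, constantCoeff_Ex]

/-- A series is determined by its logarithmic derivative and its constant term. -/
lemma eq_Ex_of_derivative {f F : PowerSeries L} (h : d⁄dX L F = d⁄dX L f * F)
    (h0 : constantCoeff F = 1) : F = Ex f := by
  have h1 : d⁄dX L (F * Ex (-f)) = d⁄dX L 1 := by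
    rw [Derivation.leibniz, derivative_Ex, h, map_neg, Derivation.map_one_eq_zero]
    simp only [smul_eq_mul]; ring
  have h1' : d⁄dX L (Ex f * Ex (-f)) = d⁄dX L 1 := by
    rw [Derivation.leibniz, derivative_Ex, derivative_Ex, map_neg, Derivation.map_one_eq_zero]
    simp only [smul_eq_mul]; ring
  have h2 : F * Ex (-f) = 1 := derivative.ext h1 (by simp [h0, constantCoeff_Ex])
  have h3 : Ex f * Ex (-f) = 1 := derivative.ext h1' (by simp [constantCoeff_Ex])
  calc F = F * (Ex f * Ex (-f)) := by rw [h3, mul_one]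
    _ = (F * Ex (-f)) * Ex f := by ring
    _ = Ex f := by rw [h2, one_mul]

lemma Ex_add (f g : PowerSeries L) : Ex (f + g) = Ex f * Ex g := by
  symm
  apply eq_Ex_of_derivative
  · rw [Derivation.leibniz, derivative_Ex, derivative_Ex, map_add]
    simp only [smul_eq_mul]; ring
  · simp [constantCoeff_Ex]

lemma Ex_zero : Ex (0 : PowerSeries L) = 1 := by
  symm
  apply eq_Ex_of_derivative <;> simp

lemma Ex_mul_neg (f : PowerSeries L) : Ex f * Ex (-f) = 1 := by
  rw [← Ex_add, add_neg_cancel, Ex_zero]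

lemma Ex_sum {ι : Type*} (s : Finset ι) (f : ι → PowerSeries L) :
    Ex (∑ i ∈ s, f i) = ∏ i ∈ s, Ex (f i) := by
  classical
  induction s using Finset.induction_on with
  | empty => simp [Ex_zero]
  | insert a s ha ih => rw [Finset.sum_insert ha, Finset.prod_insert ha, Ex_add, ih]

lemma Ex_nsmul (n : ℕ) (f : PowerSeries L) : Ex (n • f) = Ex f ^ n := by
  induction n with
  | zero => simp [Ex_zero]
  | succ n ih => rw [succ_nsmul, Ex_add, ih, pow_succ]

lemma derivative_rescale (c : L) (f : PowerSeries L) :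
    d⁄dX L (rescale c f) = C c * rescale c (d⁄dX L f) := by
  ext n
  simp only [coeff_derivative, coeff_rescale, coeff_C_mul]; ring

lemma Ex_rescale (c : L) (f : PowerSeries L) : Ex (rescale c f) = rescale c (Ex f) := by
  symm
  apply eq_Ex_of_derivative
  · rw [derivative_rescale, derivative_rescale, derivative_Ex, map_mul, mul_assoc]
  · rw [← coeff_zero_eq_constantCoeff_apply, coeff_rescale, coeff_zero_Ex]; simp

lemma derivative_expand (p : ℕ) (hp : p ≠ 0) (f : PowerSeries L) :
    d⁄dX L (expand p hp f) = expand p hp (d⁄dX L f) * d⁄dX L (X ^ p) := by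
  rw [expand_apply, expand_apply, derivative_subst (HasSubst.X_pow hp)]

lemma Ex_expand (p : ℕ) (hp : p ≠ 0) (f : PowerSeries L) :
    Ex (expand p hp f) = expand p hp (Ex f) := by
  symm
  apply eq_Ex_of_derivative
  · rw [derivative_expand, derivative_expand, derivative_Ex, map_mul]; ring
  · simp [constantCoeff_Ex]

lemma Ex_X : Ex (X : PowerSeries L) = PowerSeries.exp L := by
  symm
  apply eq_Ex_of_derivative
  · rw [derivative_exp]; simp
  · simp

lemma Ex_C_mul_X_pow (c : L) (N : ℕ) (hN : N ≠ 0) :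
    Ex (C c * X ^ N) = expand N hN (rescale c (PowerSeries.exp L)) := by
  rw [← Ex_X, ← Ex_rescale, ← Ex_expand]
  simp [rescale_X, expand_C]

lemma coeff_succ_Ex (f : PowerSeries L) (k : ℕ) :
    coeff (k + 1) (Ex f) = (∑ ij ∈ Finset.HasAntidiagonal.antidiagonal k,
      (coeff (ij.1 + 1) f * (ij.1 + 1)) * coeff ij.2 (Ex f)) / (k + 1) := by
  have h : coeff k (d⁄dX L (Ex f)) = coeff k (d⁄dX L f * Ex f) := by rw [derivative_Ex]
  rw [coeff_derivative, coeff_mul] at h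
  simp only [coeff_derivative] at h
  rw [← h, mul_div_cancel_right₀]
  exact_mod_cast Nat.succ_ne_zero k

lemma coeff_Ex_congr {f g : PowerSeries L} {N : ℕ}
    (h : ∀ k, 1 ≤ k → k ≤ N → coeff k f = coeff k g) :
    ∀ k ≤ N, coeff k (Ex f) = coeff k (Ex g) := by
  intro k
  induction k using Nat.strong_induction_on with
  | _ k ih =>
    intro hk
    rcases k with _ | k
    · rw [coeff_zero_Ex, coeff_zero_Ex]
    · rw [coeff_succ_Ex, coeff_succ_Ex]
      congr 1
      apply Finset.sum_congr rfl
      intro ij hij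
      have := Finset.HasAntidiagonal.mem_antidiagonal.mp hij
      rw [h _ (by omega) (by omega), ih ij.2 (by omega) (by omega)]

lemma Ex_congr {f g : PowerSeries L} (h : ∀ k, 1 ≤ k → coeff k f = coeff k g) : Ex f = Ex g := by
  ext k
  exact coeff_Ex_congr (N := k) (fun j hj _ => h j hj) k le_rfl

end Ex

open PowerSeries Filter Topology in
/-- Each coefficient of `exp f` is a polynomial in the coefficients of `f`, hence continuous. -/
lemma tendsto_coeff_Ex {L : Type*} [NormedField L] [CharZero L] {f : ℕ → PowerSeries L}
    {g : PowerSeries L} (h : ∀ k, 1 ≤ k → Tendsto (fun N => coeff k (f N)) atTop (𝓝 (coeff k g)))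
    (k : ℕ) : Tendsto (fun N => coeff k (Ex (f N))) atTop (𝓝 (coeff k (Ex g))) := by
  induction k using Nat.strong_induction_on with
  | _ k ih =>
    rcases k with _ | k
    · simp only [coeff_zero_Ex]; exact tendsto_const_nhds
    · simp only [coeff_succ_Ex]
      apply Tendsto.div_const
      apply tendsto_finsetSum
      intro ij hij
      have := Finset.HasAntidiagonal.mem_antidiagonal.mp hij
      exact ((h _ (by omega)).mul_const _).mul (ih ij.2 (by omega))

end KatzDwork

namespace KatzDwork

/-! ### Evaluation of power series over an ultrametric field -/

section Eval
open PowerSeries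
variable {L : Type*} [NormedField L]
set_option linter.unusedSectionVars false

/-- The value at `z` of a power series; it is meaningful when `SumAt z f` holds. -/
noncomputable def ev (z : L) (f : PowerSeries L) : L := ∑' k, coeff k f * z ^ k

/-- Absolute convergence of a power series at `z`. -/
def SumAt (z : L) (f : PowerSeries L) : Prop := Summable fun k => ‖coeff k f * z ^ k‖

lemma coeff_mul_mul_pow (z : L) (f g : PowerSeries L) (k : ℕ) :
    coeff k (f * g) * z ^ k = ∑ ij ∈ Finset.HasAntidiagonal.antidiagonal k,
      (coeff ij.1 f * z ^ ij.1) * (coeff ij.2 g * z ^ ij.2) := by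
  rw [coeff_mul, Finset.sum_mul]
  apply Finset.sum_congr rfl
  intro ij hij
  rw [← Finset.HasAntidiagonal.mem_antidiagonal.mp hij, pow_add]; ring

lemma SumAt.mul {z : L} {f g : PowerSeries L} (hf : SumAt z f) (hg : SumAt z g) :
    SumAt z (f * g) := by
  have h := summable_norm_sum_mul_antidiagonal_of_summable_norm
    (f := fun k => coeff k f * z ^ k) (g := fun k => coeff k g * z ^ k) hf hg
  refine h.congr fun k => ?_
  rw [coeff_mul_mul_pow]

lemma ev_mul [CompleteSpace L] {z : L} {f g : PowerSeries L} (hf : SumAt z f) (hg : SumAt z g) :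
    ev z (f * g) = ev z f * ev z g := by
  unfold ev
  simp_rw [coeff_mul_mul_pow]
  exact (tsum_mul_tsum_eq_tsum_sum_antidiagonal_of_summable_norm hf hg).symm

lemma ev_add [CompleteSpace L] {z : L} {f g : PowerSeries L} (hf : SumAt z f) (hg : SumAt z g) :
    ev z (f + g) = ev z f + ev z g := by
  unfold ev
  rw [← Summable.tsum_add hf.of_norm hg.of_norm]
  simp [add_mul]

lemma ev_C (z a : L) : ev z (C a) = a := by
  unfold ev
  rw [tsum_eq_single 0]
  · simp
  · intro k hk; simp [coeff_C, hk]

lemma ev_one (z : L) : ev z 1 = 1 := by simpa using ev_C z 1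

lemma ev_zero (z : L) : ev z 0 = 0 := by simpa using ev_C z 0

lemma sumAt_C (z a : L) : SumAt z (C a) := by
  apply summable_of_ne_finset_zero (s := {0})
  intro k hk
  have : k ≠ 0 := by simpa using hk
  simp [coeff_C, this]

lemma ev_X (z : L) : ev z X = z := by
  unfold ev
  rw [tsum_eq_single 1]
  · simp
  · intro k hk; simp [coeff_X, hk]

lemma ev_rescale (z c : L) (f : PowerSeries L) : ev z (rescale c f) = ev (c * z) f := by
  unfold ev
  apply tsum_congr
  intro k
  rw [coeff_rescale, mul_pow]; ring

lemma SumAt.rescale {z c : L} {f : PowerSeries L} (h : SumAt (c * z) f) :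
    SumAt z (rescale c f) := by
  unfold SumAt at *
  convert h using 2 with k
  rw [coeff_rescale, mul_pow]; ring_nf

lemma expand_support (N : ℕ) (hN : N ≠ 0) (z : L) (f : PowerSeries L) :
    Function.support (fun k => coeff k (expand N hN f) * z ^ k) ⊆ Set.range (fun k => N * k) := by
  intro k hk
  by_contra h
  apply hk
  have : ¬ N ∣ k := by rintro ⟨j, rfl⟩; exact h ⟨j, rfl⟩
  simp [coeff_expand_of_not_dvd _ _ _ this]

lemma ev_expand (N : ℕ) (hN : N ≠ 0) (z : L) (f : PowerSeries L) :
    ev z (expand N hN f) = ev (z ^ N) f := by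
  unfold ev
  have hi : Function.Injective (fun k : ℕ => N * k) := fun a b h =>
    Nat.eq_of_mul_eq_mul_left (Nat.pos_of_ne_zero hN) h
  rw [← hi.tsum_eq (expand_support N hN z f)]
  apply tsum_congr
  intro k
  simp [coeff_expand_mul, pow_mul]

lemma SumAt.expand {N : ℕ} (hN : N ≠ 0) {z : L} {f : PowerSeries L} (h : SumAt (z ^ N) f) :
    SumAt z (expand N hN f) := by
  unfold SumAt at *
  have hi : Function.Injective (fun k : ℕ => N * k) := fun a b h =>
    Nat.eq_of_mul_eq_mul_left (Nat.pos_of_ne_zero hN) h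
  rw [← hi.summable_iff]
  · convert h using 2 with k
    simp [coeff_expand_mul, pow_mul]
  · intro k hk
    have := mt (@expand_support _ _ N hN z f k) hk
    rw [Function.mem_support, not_not] at this
    rw [this, norm_zero]

/-- `f` is bounded by `K` on the closed disc of radius `R` in the Gauss norm. -/
def BdAt (f : PowerSeries L) (R K : ℝ) : Prop := ∀ k, ‖coeff k f‖ * R ^ k ≤ K

lemma BdAt.sumAt {f : PowerSeries L} {R K : ℝ} {z : L} (h : BdAt f R K) (hz : ‖z‖ < R) :
    SumAt z f := by
  have hR : 0 < R := (norm_nonneg z).trans_lt hz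
  apply Summable.of_nonneg_of_le (fun _ => norm_nonneg _) (fun k => ?_)
    ((summable_geometric_of_lt_one (r := ‖z‖ / R) (by positivity)
      ((div_lt_one hR).mpr hz)).mul_left K)
  rw [norm_mul, norm_pow, div_pow, mul_div_assoc', le_div_iff₀ (by positivity)]
  have := mul_le_mul_of_nonneg_right (h k) (pow_nonneg (norm_nonneg z) k)
  linarith

variable [IsUltrametricDist L]

lemma BdAt.mul {f g : PowerSeries L} {R K K' : ℝ} (hR : 0 ≤ R) (hf : BdAt f R K)
    (hg : BdAt g R K') : BdAt (f * g) R (K * K') := by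
  intro k
  have hK : 0 ≤ K := le_trans (by positivity) (hf 0)
  have hK' : 0 ≤ K' := le_trans (by positivity) (hg 0)
  rw [coeff_mul]
  obtain ⟨ij, hij, hle⟩ := IsUltrametricDist.exists_norm_finsetSum_le_of_nonempty
    (t := Finset.HasAntidiagonal.antidiagonal k) ⟨(0, k), by simp⟩
    (fun ij => coeff ij.1 f * coeff ij.2 g)
  calc _ ≤ ‖coeff ij.1 f * coeff ij.2 g‖ * R ^ k := by gcongr
    _ = (‖coeff ij.1 f‖ * R ^ ij.1) * (‖coeff ij.2 g‖ * R ^ ij.2) := by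
      rw [← Finset.HasAntidiagonal.mem_antidiagonal.mp hij, pow_add, norm_mul]; ring
    _ ≤ K * K' := mul_le_mul (hf _) (hg _) (by positivity) hK

lemma BdAt.add {f g : PowerSeries L} {R K K' : ℝ} (hR : 0 ≤ R) (hf : BdAt f R K)
    (hg : BdAt g R K') : BdAt (f + g) R (max K K') := by
  intro k
  rw [map_add]
  calc _ ≤ max ‖coeff k f‖ ‖coeff k g‖ * R ^ k := by
        gcongr; exact IsUltrametricDist.norm_add_le_max _ _
    _ = max (‖coeff k f‖ * R ^ k) (‖coeff k g‖ * R ^ k) := max_mul_of_nonneg _ _ (by positivity)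
    _ ≤ _ := max_le_max (hf k) (hg k)

lemma bdAt_C (a : L) (R : ℝ) : BdAt (C a) R ‖a‖ := by
  intro k
  rcases k with _ | k <;> simp [coeff_C]

/-- The ring of entire power series: those which are bounded on every disc. -/
def entire (L : Type*) [NormedField L] [IsUltrametricDist L] : Subring (PowerSeries L) where
  carrier := {f | ∀ R : ℝ, 0 ≤ R → ∃ K, BdAt f R K}
  mul_mem' hf hg R hR := by
    obtain ⟨K, h⟩ := hf R hR
    obtain ⟨K', h'⟩ := hg R hR
    exact ⟨_, h.mul hR h'⟩
  one_mem' R _ := ⟨_, by simpa using bdAt_C (1 : L) R⟩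
  add_mem' hf hg R hR := by
    obtain ⟨K, h⟩ := hf R hR
    obtain ⟨K', h'⟩ := hg R hR
    exact ⟨_, h.add hR h'⟩
  zero_mem' R _ := ⟨_, by simpa using bdAt_C (0 : L) R⟩
  neg_mem' hf R hR := by
    obtain ⟨K, h⟩ := hf R hR
    exact ⟨K, fun k => by simpa using h k⟩

lemma C_mem_entire (a : L) : C a ∈ entire L := fun R _ => ⟨_, bdAt_C a R⟩

lemma X_mem_entire : (X : PowerSeries L) ∈ entire L := by
  intro R hR
  refine ⟨R, fun k => ?_⟩
  rw [coeff_X]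
  split_ifs with h
  · simp [h]
  · simpa using hR

lemma sumAt_of_entire {f : PowerSeries L} (hf : f ∈ entire L) (z : L) : SumAt z f := by
  obtain ⟨K, h⟩ := hf (‖z‖ + 1) (by positivity)
  exact h.sumAt (by linarith)

lemma derivative_mem_entire {f : PowerSeries L} (hf : f ∈ entire L) : d⁄dX L f ∈ entire L := by
  intro R hR
  obtain ⟨K, h⟩ := hf (R + 1) (by positivity)
  refine ⟨K, fun k => ?_⟩
  rw [coeff_derivative, norm_mul]
  have h1 : ‖((k : L) + 1)‖ ≤ 1 := by
    exact_mod_cast IsUltrametricDist.norm_natCast_le_one L (k + 1)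
  calc ‖coeff (k + 1) f‖ * ‖((k : L) + 1)‖ * R ^ k
      ≤ ‖coeff (k + 1) f‖ * 1 * (R + 1) ^ k := by gcongr; linarith
    _ ≤ ‖coeff (k + 1) f‖ * (R + 1) ^ (k + 1) := by
      rw [mul_one]
      gcongr
      · linarith
      · omega
    _ ≤ K := h _

lemma rescale_mem_entire {f : PowerSeries L} (hf : f ∈ entire L) (c : L) :
    rescale c f ∈ entire L := by
  intro R hR
  obtain ⟨K, h⟩ := hf (‖c‖ * R) (by positivity)
  refine ⟨K, fun k => ?_⟩
  have := h k
  rw [coeff_rescale, norm_mul, norm_pow]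
  rw [mul_pow] at this
  linarith

variable [CompleteSpace L]

lemma ev_sum {ι : Type*} (s : Finset ι) (f : ι → PowerSeries L) (z : L)
    (hf : ∀ i ∈ s, f i ∈ entire L) : ev z (∑ i ∈ s, f i) = ∑ i ∈ s, ev z (f i) := by
  classical
  induction s using Finset.induction_on with
  | empty => simp [ev_zero]
  | insert a s ha ih =>
    rw [Finset.sum_insert ha, Finset.sum_insert ha, ev_add, ih]
    · exact fun i hi => hf i (Finset.mem_insert_of_mem hi)
    · exact sumAt_of_entire (hf a (Finset.mem_insert_self _ _)) z
    · exact sumAt_of_entire (sum_mem fun i hi => hf i (Finset.mem_insert_of_mem hi)) z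

lemma ev_prod {ι : Type*} (s : Finset ι) (f : ι → PowerSeries L) (z : L)
    (hf : ∀ i ∈ s, f i ∈ entire L) : ev z (∏ i ∈ s, f i) = ∏ i ∈ s, ev z (f i) := by
  classical
  induction s using Finset.induction_on with
  | empty => simp [ev_one]
  | insert a s ha ih =>
    rw [Finset.prod_insert ha, Finset.prod_insert ha, ev_mul, ih]
    · exact fun i hi => hf i (Finset.mem_insert_of_mem hi)
    · exact sumAt_of_entire (hf a (Finset.mem_insert_self _ _)) z
    · exact sumAt_of_entire (prod_mem fun i hi => hf i (Finset.mem_insert_of_mem hi)) z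

/-- The linear series `1 - cX`. -/
noncomputable def lin (c : L) : PowerSeries L := 1 - C c * X

lemma lin_mem_entire (c : L) : lin c ∈ entire L :=
  sub_mem (one_mem _) (mul_mem (C_mem_entire c) X_mem_entire)

lemma ev_lin (c z : L) : ev z (lin c) = 1 - c * z := by
  have : lin c = 1 + C (-c) * X := by rw [lin, map_neg]; ring
  rw [this, ev_add (by simpa using sumAt_C z 1)
    (sumAt_of_entire (mul_mem (C_mem_entire _) X_mem_entire) z), ev_mul (sumAt_C _ _)
    (sumAt_of_entire X_mem_entire z), ev_C, ev_X, ev_one]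
  ring

lemma lin_mul_geom (c : L) : lin c * PowerSeries.mk (fun k => c ^ k) = 1 := by
  have h := PowerSeries.mk_one_mul_one_sub_eq_one L
  have h2 := congrArg (rescale c) h
  rw [map_mul, map_sub, map_one, rescale_X, mul_comm] at h2
  have h3 : PowerSeries.mk (fun k => c ^ k) = rescale c (PowerSeries.mk 1) := by
    ext k
    simp [coeff_rescale]
  rw [lin, h3]
  exact h2

omit [CompleteSpace L] in
lemma coeff_zero_lin (c : L) : coeff 0 (lin c) = 1 := by simp [lin]

/-- An entire series vanishing at `c⁻¹` is divisible by `1 - cX`, and on a disc of radius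
`R > ‖c⁻¹‖` the Gauss norm of the quotient is smaller by the factor `‖c‖ R`. -/
lemma exists_lin_mul {f : PowerSeries L} (hf : f ∈ entire L) {c : L} (hc : c ≠ 0)
    (h0 : ev c⁻¹ f = 0) : ∃ g, f = lin c * g ∧
      ∀ R K : ℝ, 1 < ‖c‖ * R → BdAt f R K → BdAt g R (K / (‖c‖ * R)) := by
  refine ⟨PowerSeries.mk (fun k => c ^ k) * f, by rw [← mul_assoc, lin_mul_geom, one_mul], ?_⟩
  intro R K hR hK k
  have hc0 : 0 < ‖c‖ := norm_pos_iff.mpr hc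
  have hR0 : 0 < R := by
    by_contra h
    have := mul_nonpos_of_nonneg_of_nonpos hc0.le (not_lt.mp h)
    linarith
  have hK0 : 0 ≤ K := le_trans (by positivity) (hK 0)
  -- since `f(c⁻¹) = 0`, the partial sum of `f(c⁻¹)` computing the quotient is minus a tail
  have hs := (sumAt_of_entire hf c⁻¹).of_norm
  have htail := hs.sum_add_tsum_nat_add (k + 1)
  have hcoef : coeff k (PowerSeries.mk (fun k => c ^ k) * f)
      = c ^ k * ∑ i ∈ Finset.range (k + 1), coeff i f * c⁻¹ ^ i := by
    rw [mul_comm (PowerSeries.mk _), coeff_mul,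
      Finset.Nat.sum_antidiagonal_eq_sum_range_succ_mk, Finset.mul_sum]
    apply Finset.sum_congr rfl
    intro i hi
    have hi' : i ≤ k := by simpa [Nat.lt_succ_iff] using hi
    have : c ^ k = c ^ (k - i) * c ^ i := by rw [← pow_add, Nat.sub_add_cancel hi']
    rw [this, coeff_mk, inv_pow]
    field_simp
  have hev : ∑ i ∈ Finset.range (k + 1), coeff i f * c⁻¹ ^ i
      = - ∑' i, coeff (i + (k + 1)) f * c⁻¹ ^ (i + (k + 1)) := by
    rw [eq_neg_iff_add_eq_zero]
    rw [htail]; exact h0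
  rw [hcoef, hev, norm_mul, norm_neg]
  have hb : ‖∑' i, coeff (i + (k + 1)) f * c⁻¹ ^ (i + (k + 1))‖ ≤ K / (‖c‖ * R) ^ (k + 1) := by
    apply IsUltrametricDist.norm_tsum_le_of_forall_le_of_nonneg (by positivity)
    intro i
    have h1 := hK (i + (k + 1))
    rw [norm_mul, norm_pow, norm_inv]
    calc ‖coeff (i + (k + 1)) f‖ * ‖c‖⁻¹ ^ (i + (k + 1))
        = (‖coeff (i + (k + 1)) f‖ * R ^ (i + (k + 1))) / (‖c‖ * R) ^ (i + (k + 1)) := by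
          rw [mul_pow, inv_pow]; field_simp
      _ ≤ K / (‖c‖ * R) ^ (k + 1) := by
          apply div_le_div₀ hK0 h1 (by positivity)
          exact pow_le_pow_right₀ hR.le (by omega)
  calc _ ≤ ‖c ^ k‖ * (K / (‖c‖ * R) ^ (k + 1)) * R ^ k := by gcongr
    _ = K / (‖c‖ * R) := by
      rw [norm_pow, pow_succ, mul_pow]; field_simp

/-- An entire series with constant term `1` has a zero of finite order at `c⁻¹`. -/
lemma exists_order {f : PowerSeries L} (hf : f ∈ entire L) (hf0 : coeff 0 f = 1) {c : L}
    (hc : c ≠ 0) : ∃ (n : ℕ) (g : PowerSeries L), g ∈ entire L ∧ f = lin c ^ n * g ∧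
      ev c⁻¹ g ≠ 0 := by
  have hc0 : 0 < ‖c‖ := norm_pos_iff.mpr hc
  -- on the disc of radius `2 / ‖c‖` each division by `1 - cX` halves the Gauss norm, which is
  -- at least `1` because the constant term is `1`
  have key : ∀ (m : ℕ) (f : PowerSeries L), f ∈ entire L → coeff 0 f = 1 →
      BdAt f (2 / ‖c‖) (2 ^ m) → ∃ (n : ℕ) (g : PowerSeries L), g ∈ entire L ∧
        f = lin c ^ n * g ∧ ev c⁻¹ g ≠ 0 := by
    intro m
    induction m with
    | zero =>
      intro f hf hf0 hb
      refine ⟨0, f, hf, by simp, fun h => ?_⟩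
      obtain ⟨g, hg, hgb⟩ := exists_lin_mul hf hc h
      have h2 : ‖c‖ * (2 / ‖c‖) = 2 := by field_simp
      have h1 := hgb _ _ (by rw [h2]; norm_num) hb 0
      have hg0 : coeff 0 g = 1 := by
        have := congrArg (coeff 0) hg
        rw [hf0] at this
        simpa [coeff_mul, lin] using this.symm
      rw [h2, hg0] at h1
      norm_num at h1
    | succ m ih =>
      intro f hf hf0 hb
      by_cases h : ev c⁻¹ f = 0
      · obtain ⟨g, hg, hgb⟩ := exists_lin_mul hf hc h
        have h2 : ‖c‖ * (2 / ‖c‖) = 2 := by field_simp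
        have h1 := hgb _ _ (by rw [h2]; norm_num) hb
        have hg0 : coeff 0 g = 1 := by
          have := congrArg (coeff 0) hg
          rw [hf0] at this
          simpa [coeff_mul, lin] using this.symm
        have hge : g ∈ entire L := by
          intro R hR
          obtain ⟨K, hK⟩ := hf (max R (2 / ‖c‖)) (by positivity)
          have hle : 2 ≤ ‖c‖ * max R (2 / ‖c‖) := by
            calc (2 : ℝ) = ‖c‖ * (2 / ‖c‖) := h2.symm
              _ ≤ _ := by gcongr; exact le_max_right _ _
          have := hgb _ _ (by linarith) hK
          refine ⟨_, fun k => le_trans ?_ (this k)⟩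
          gcongr
          exact le_max_left _ _
        have h3 : (2 : ℝ) ^ (m + 1) / (‖c‖ * (2 / ‖c‖)) = 2 ^ m := by
          rw [h2, pow_succ]; norm_num
        rw [h3] at h1
        obtain ⟨n, g', hg', hgg, hne⟩ := ih g hge hg0 h1
        exact ⟨n + 1, g', hg', by rw [hg, hgg, pow_succ]; ring, hne⟩
      · exact ⟨0, f, hf, by simp, h⟩
  obtain ⟨K, hK⟩ := hf (2 / ‖c‖) (by positivity)
  obtain ⟨m, hm⟩ := pow_unbounded_of_one_lt K (by norm_num : (1 : ℝ) < 2)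
  exact key m f hf hf0 fun k => (hK k).trans hm.le

end Eval
end KatzDwork

namespace KatzDwork

/-! ### Sequences with meromorphic zeta series -/

section Mero
open PowerSeries
variable {L : Type*} [NormedField L] [CharZero L]
set_option linter.unusedSectionVars false

/-- The series `∑_{l ≥ 1} s_l X^l / l`. -/
noncomputable def Ls (s : ℕ → L) : PowerSeries L := PowerSeries.mk fun l => s l / l

/-- The zeta series `exp (∑_{l ≥ 1} s_l X^l / l)` of a sequence. -/
noncomputable def Zs (s : ℕ → L) : PowerSeries L := Ex (Ls s)

lemma coeff_derivative_Ls (s : ℕ → L) (k : ℕ) : coeff k (d⁄dX L (Ls s)) = s (k + 1) := by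
  rw [coeff_derivative, Ls, coeff_mk]
  have : ((k : L) + 1) ≠ 0 := by exact_mod_cast Nat.succ_ne_zero k
  push_cast
  field_simp

lemma Ls_add (s t : ℕ → L) : Ls (s + t) = Ls s + Ls t := by
  ext k; simp [Ls, add_div]

lemma Ls_neg (s : ℕ → L) : Ls (-s) = -Ls s := by
  ext k; simp [Ls, neg_div]

lemma Ls_rescale (s : ℕ → L) (c : L) : Ls (fun l => c ^ l * s l) = rescale c (Ls s) := by
  ext k; simp [Ls, coeff_rescale, mul_div_assoc]

variable [IsUltrametricDist L]

/-- The zeta series of `s` is a quotient of two entire series with constant term `1`. -/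
def Mero (s : ℕ → L) : Prop := ∃ A ∈ entire L, ∃ B ∈ entire L,
  coeff 0 A = 1 ∧ coeff 0 B = 1 ∧ A = B * Zs s

lemma Mero.congr {s t : ℕ → L} (hs : Mero s) (h : ∀ l, 1 ≤ l → s l = t l) : Mero t := by
  obtain ⟨A, hA, B, hB, hA0, hB0, hAB⟩ := hs
  refine ⟨A, hA, B, hB, hA0, hB0, ?_⟩
  rw [hAB, Zs, Zs]
  congr 1
  apply Ex_congr
  intro k hk
  simp [Ls, h k hk]

lemma mero_of_entire {s : ℕ → L} (h : Zs s ∈ entire L) : Mero s :=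
  ⟨_, h, 1, one_mem _, coeff_zero_Ex _, by simp, by simp⟩

lemma mero_zero : Mero (0 : ℕ → L) := by
  apply mero_of_entire
  have : Ls (0 : ℕ → L) = 0 := by ext k; simp [Ls]
  rw [Zs, this, Ex_zero]
  exact one_mem _

lemma Mero.add {s t : ℕ → L} (hs : Mero s) (ht : Mero t) : Mero (s + t) := by
  obtain ⟨A, hA, B, hB, hA0, hB0, hAB⟩ := hs
  obtain ⟨A', hA', B', hB', hA0', hB0', hAB'⟩ := ht
  refine ⟨A * A', mul_mem hA hA', B * B', mul_mem hB hB', ?_, ?_, ?_⟩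
  · simp_all [coeff_mul]
  · simp_all [coeff_mul]
  · rw [hAB, hAB', Zs, Zs, Zs, Ls_add, Ex_add]; ring

lemma Mero.neg {s : ℕ → L} (hs : Mero s) : Mero (-s) := by
  obtain ⟨A, hA, B, hB, hA0, hB0, hAB⟩ := hs
  refine ⟨B, hB, A, hA, hB0, hA0, ?_⟩
  rw [hAB, Zs, Zs, Ls_neg, mul_assoc, Ex_mul_neg, mul_one]

lemma Mero.sub {s t : ℕ → L} (hs : Mero s) (ht : Mero t) : Mero (s - t) := by
  rw [sub_eq_add_neg]; exact hs.add ht.neg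

lemma Mero.sum {ι : Type*} (I : Finset ι) (s : ι → ℕ → L) (h : ∀ i ∈ I, Mero (s i)) :
    Mero (fun l => ∑ i ∈ I, s i l) := by
  classical
  induction I using Finset.induction_on with
  | empty => exact (mero_zero (L := L)).congr fun l _ => by simp
  | insert a I ha ih =>
    have h1 := (h a (Finset.mem_insert_self _ _)).add
      (ih fun i hi => h i (Finset.mem_insert_of_mem hi))
    refine h1.congr fun l _ => ?_
    rw [Finset.sum_insert ha]; rfl

lemma Mero.nsmul {s : ℕ → L} (hs : Mero s) (n : ℕ) : Mero (fun l => (n : L) * s l) := by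
  have := Mero.sum (Finset.range n) (fun _ => s) (fun _ _ => hs)
  simpa using this

lemma Mero.zsmul {s : ℕ → L} (hs : Mero s) (n : ℤ) : Mero (fun l => (n : L) * s l) := by
  obtain ⟨m, rfl | rfl⟩ := n.eq_nat_or_neg
  · simpa using hs.nsmul m
  · refine (hs.nsmul m).neg.congr fun l _ => ?_
    simp

lemma Mero.pow_mul {s : ℕ → L} (hs : Mero s) (c : L) : Mero (fun l => c ^ l * s l) := by
  obtain ⟨A, hA, B, hB, hA0, hB0, hAB⟩ := hs
  refine ⟨rescale c A, rescale_mem_entire hA c, rescale c B, rescale_mem_entire hB c, ?_, ?_, ?_⟩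
  · rw [coeff_rescale, hA0]; simp
  · rw [coeff_rescale, hB0]; simp
  · rw [hAB, map_mul, Zs, Zs, Ls_rescale, Ex_rescale]

lemma Mero.sub_one_pow_mul {s : ℕ → L} (hs : Mero s) (c : L) (n : ℕ) :
    Mero (fun l => (c ^ l - 1) ^ n * s l) := by
  induction n with
  | zero => simpa using hs
  | succ n ih =>
    refine ((ih.pow_mul c).sub ih).congr fun l _ => ?_
    simp only [Pi.sub_apply]
    ring

variable [CompleteSpace L]

lemma derivative_lin_pow (c : L) (n : ℕ) :
    lin c * d⁄dX L (lin c ^ n) = -(C (n * c)) * lin c ^ n := by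
  have h1 : d⁄dX L (lin c) = - C c := by
    rw [lin, map_sub, Derivation.leibniz]
    simp
  rw [Derivation.leibniz_pow, h1]
  rcases n with _ | n
  · simp
  · simp only [Nat.add_sub_cancel, smul_eq_mul, nsmul_eq_mul, map_mul, map_natCast]
    ring

/-- If `s_l = ∑ a_i r_i^l` has meromorphic zeta series then the `a_i` are integers: `-a_i` is the
order of that series at `r_i⁻¹`. -/
lemma Mero.exists_int {ι : Type*} (I : Finset ι) (a r : ι → L) (hr : ∀ i ∈ I, r i ≠ 0)
    (hinj : Set.InjOn r I) (h : Mero (fun l => ∑ i ∈ I, a i * r i ^ l)) :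
    ∀ i ∈ I, ∃ m : ℤ, a i = m := by
  classical
  intro i hi
  obtain ⟨A, hA, B, hB, hA0, hB0, hAB⟩ := h
  set F := Ls (fun l => ∑ i ∈ I, a i * r i ^ l) with hF
  have hdF : d⁄dX L F = ∑ j ∈ I, C (a j * r j) * PowerSeries.mk (fun k => r j ^ k) := by
    ext k
    rw [coeff_derivative_Ls, map_sum]
    apply Finset.sum_congr rfl
    intro j _
    rw [coeff_C_mul, coeff_mk, pow_succ]; ring
  have h1 : d⁄dX L A * B = d⁄dX L B * A + A * B * d⁄dX L F := by
    rw [hAB, Derivation.leibniz, Zs, derivative_Ex]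
    simp only [smul_eq_mul]
    ring
  -- clear the denominators of the logarithmic derivative
  set M := ∏ j ∈ I.erase i, lin (r j) with hM
  have hMe : M ∈ entire L := prod_mem fun j _ => lin_mem_entire _
  have h2 : lin (r i) * M * d⁄dX L F = C (a i * r i) * M + lin (r i) *
      ∑ j ∈ I.erase i, C (a j * r j) * ∏ k ∈ (I.erase i).erase j, lin (r k) := by
    rw [hdF, ← Finset.add_sum_erase I _ hi, mul_add]
    congr 1
    · calc _ = C (a i * r i) * M * (lin (r i) * PowerSeries.mk (fun k => r i ^ k)) := by ring
        _ = _ := by rw [lin_mul_geom, mul_one]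
    · rw [mul_assoc, Finset.mul_sum, Finset.mul_sum, Finset.mul_sum]
      apply Finset.sum_congr rfl
      intro j hj
      rw [hM, ← Finset.mul_prod_erase _ _ hj]
      calc _ = lin (r i) * (C (a j * r j) * (∏ k ∈ (I.erase i).erase j, lin (r k))) *
          (lin (r j) * PowerSeries.mk (fun k => r j ^ k)) := by ring
        _ = _ := by rw [lin_mul_geom, mul_one]
  set T := ∑ j ∈ I.erase i, C (a j * r j) * ∏ k ∈ (I.erase i).erase j, lin (r k) with hT
  have hTe : T ∈ entire L := sum_mem fun j _ =>
    mul_mem (C_mem_entire _) (prod_mem fun k _ => lin_mem_entire _)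
  obtain ⟨α, A1, hA1, hA', hA1z⟩ := exists_order hA hA0 (hr i hi)
  obtain ⟨β, B1, hB1, hB', hB1z⟩ := exists_order hB hB0 (hr i hi)
  set c := r i with hc
  have hlin : lin c ≠ 0 := by
    intro h; have := coeff_zero_lin c; rw [h] at this; simp at this
  have dA : lin c * d⁄dX L A = lin c ^ α * (-(C (α * c)) * A1 + lin c * d⁄dX L A1) := by
    rw [hA', Derivation.leibniz]
    simp only [smul_eq_mul]
    linear_combination A1 * derivative_lin_pow c α
  have dB : lin c * d⁄dX L B = lin c ^ β * (-(C (β * c)) * B1 + lin c * d⁄dX L B1) := by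
    rw [hB', Derivation.leibniz]
    simp only [smul_eq_mul]
    linear_combination B1 * derivative_lin_pow c β
  have h3 : M * (-(C (α * c)) * A1 + lin c * d⁄dX L A1) * B1 =
      M * (-(C (β * c)) * B1 + lin c * d⁄dX L B1) * A1 +
      A1 * B1 * (C (a i * c) * M + lin c * T) := by
    apply mul_left_cancel₀ (pow_ne_zero (α + β) hlin)
    have e1 : lin c * M * (d⁄dX L A * B) =
        lin c * M * (d⁄dX L B * A + A * B * d⁄dX L F) := by rw [h1]
    have e2 : M * (lin c * d⁄dX L A) * B =
        M * (lin c * d⁄dX L B) * A + A * B * (lin c * M * d⁄dX L F) := by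
      linear_combination e1
    rw [dA, dB, h2] at e2
    rw [hA', hB'] at e2
    rw [pow_add]
    linear_combination e2
  have h4 : M * A1 * B1 * C ((β - α - a i) * c) + lin c *
      (M * (d⁄dX L A1 * B1 - d⁄dX L B1 * A1) - A1 * B1 * T) = 0 := by
    simp only [map_mul, map_sub, map_natCast] at h3 ⊢
    linear_combination h3
  have hs := fun {f : PowerSeries L} (hf : f ∈ entire L) => sumAt_of_entire hf c⁻¹
  have hd1 := derivative_mem_entire hA1
  have hd2 := derivative_mem_entire hB1
  have hU : M * (d⁄dX L A1 * B1 - d⁄dX L B1 * A1) - A1 * B1 * T ∈ entire L :=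
    sub_mem (mul_mem hMe (sub_mem (mul_mem hd1 hB1) (mul_mem hd2 hA1)))
      (mul_mem (mul_mem hA1 hB1) hTe)
  have h5 := congrArg (ev c⁻¹) h4
  have hMA := mul_mem (mul_mem hMe hA1) hB1
  have hc0 : c ≠ 0 := hr i hi
  rw [ev_add (hs (mul_mem hMA (C_mem_entire _))) (hs (mul_mem (lin_mem_entire _) hU)),
    ev_mul (hs hMA) (hs (C_mem_entire _)), ev_mul (hs (lin_mem_entire _)) (hs hU),
    ev_mul (hs (mul_mem hMe hA1)) (hs hB1), ev_mul (hs hMe) (hs hA1), ev_lin, ev_C, ev_zero,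
    mul_inv_cancel₀ hc0, sub_self, zero_mul, add_zero] at h5
  have hMz : ev c⁻¹ M ≠ 0 := by
    rw [hM, ev_prod _ _ _ fun j _ => lin_mem_entire _]
    rw [Finset.prod_ne_zero_iff]
    intro j hj h
    rw [ev_lin, sub_eq_zero] at h
    have : r j = c := by field_simp at h; exact h.symm
    exact Finset.ne_of_mem_erase hj (hinj (Finset.mem_of_mem_erase hj) hi this)
  have h6 : (β - α - a i) * c = 0 := by
    rcases mul_eq_zero.mp h5 with h | h
    · exact absurd h (mul_ne_zero (mul_ne_zero hMz hA1z) hB1z)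
    · exact h
  refine ⟨(β : ℤ) - α, ?_⟩
  have := (mul_eq_zero.mp h6).resolve_right hc0
  push_cast
  linear_combination -this

end Mero
end KatzDwork

namespace KatzDwork

/-! ### Characteristic series of matrices -/

section Det
open PowerSeries
set_option linter.unusedSectionVars false

lemma derivation_prod {R A : Type*} [CommRing R] [CommRing A] [Algebra R A] (D : Derivation R A A)
    {ι : Type*} [DecidableEq ι] (s : Finset ι) (f : ι → A) :
    D (∏ i ∈ s, f i) = ∑ i ∈ s, D (f i) * ∏ j ∈ s.erase i, f j := by
  induction s using Finset.induction_on with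
  | empty => simp
  | insert a s ha ih =>
    rw [Finset.prod_insert ha, Derivation.leibniz, ih, Finset.sum_insert ha,
      Finset.erase_insert ha]
    simp only [smul_eq_mul]
    rw [add_comm, mul_comm, Finset.mul_sum]
    congr 1
    apply Finset.sum_congr rfl
    intro i hi
    have hia : i ≠ a := fun h => ha (h ▸ hi)
    rw [Finset.erase_insert_of_ne hia.symm, Finset.prod_insert]
    · ring
    · exact fun h => ha (Finset.mem_of_mem_erase h)

/-- Jacobi's formula. -/
lemma derivation_det {R A : Type*} [CommRing R] [CommRing A] [Algebra R A] (D : Derivation R A A)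
    {ι : Type*} [DecidableEq ι] [Fintype ι] (M : Matrix ι ι A) :
    D M.det = (M.adjugate * M.map D).trace := by
  have h1 : ∀ j, (M.adjugate * M.map D) j j = (M.updateCol j fun i => D (M i j)).det := by
    intro j
    rw [← Matrix.cramer_apply, Matrix.cramer_eq_adjugate_mulVec]
    rfl
  rw [Matrix.trace, Finset.sum_congr rfl fun j _ => by rw [Matrix.diag_apply, h1 j], Matrix.det_apply, map_sum]
  simp_rw [Matrix.det_apply]
  rw [Finset.sum_comm]
  apply Finset.sum_congr rfl
  intro σ _
  rw [Units.smul_def, map_zsmul, derivation_prod, Finset.smul_sum]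
  apply Finset.sum_congr rfl
  intro j _
  rw [Units.smul_def, ← Finset.mul_prod_erase _ _ (Finset.mem_univ j)]
  congr 2
  · simp
  · apply Finset.prod_congr rfl
    intro k hk
    rw [Matrix.updateCol_ne (Finset.ne_of_mem_erase hk)]

variable {L : Type*} [NormedField L] [CharZero L]

/-- The reciprocal characteristic series `det (1 - X A)`. -/
noncomputable def detS {ι : Type*} [DecidableEq ι] [Fintype ι] (A : Matrix ι ι L) :
    PowerSeries L :=
  (1 - (X : PowerSeries L) • A.map C).det

lemma detS_eq {ι : Type*} [DecidableEq ι] [Fintype ι] (A : Matrix ι ι L) :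
    detS A = Zs (fun l => -(A ^ l).trace) := by
  set M : Matrix ι ι (PowerSeries L) := 1 - (X : PowerSeries L) • A.map C with hM
  set S : Matrix ι ι (PowerSeries L) := fun i j => PowerSeries.mk fun k => (A ^ k) i j with hS
  have hAS : ∀ i j, (A.map C * S) i j = PowerSeries.mk fun k => (A ^ (k + 1)) i j := by
    intro i j
    ext k
    rw [Matrix.mul_apply, map_sum, coeff_mk, pow_succ', Matrix.mul_apply]
    simp [hS]
  have hMS : M * S = 1 := by
    rw [hM, sub_mul, one_mul, Matrix.smul_mul]
    ext i j k
    rw [Matrix.sub_apply, Matrix.smul_apply, hAS, smul_eq_mul, map_sub]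
    rcases k with _ | k
    · simp [hS, Matrix.one_apply, coeff_zero_X_mul]
    · rw [coeff_succ_X_mul, hS, coeff_mk, coeff_mk, sub_self, Matrix.one_apply]
      split_ifs <;> simp [coeff_one]
  have hadj : M.adjugate = M.det • S := by
    calc M.adjugate = M.adjugate * (M * S) := by rw [hMS, mul_one]
      _ = _ := by rw [← mul_assoc, Matrix.adjugate_mul, Matrix.smul_mul, one_mul]
  apply eq_Ex_of_derivative
  · rw [detS, derivation_det, ← hM, hadj]
    have hd : M.map (d⁄dX L) = - A.map C := by
      ext1 i j
      simp only [hM, Matrix.map_apply, Matrix.sub_apply, Matrix.smul_apply, Matrix.neg_apply,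
        map_sub, smul_eq_mul, Derivation.leibniz]
      have : d⁄dX L ((1 : Matrix ι ι (PowerSeries L)) i j) = 0 := by
        rw [Matrix.one_apply]; split_ifs <;> simp
      rw [this]
      simp
    rw [hd, Matrix.smul_mul, Matrix.trace_smul, smul_eq_mul, mul_comm M.det, mul_neg,
      Matrix.trace_neg, Matrix.trace_mul_comm]
    congr 1
    ext k
    rw [coeff_derivative_Ls, Matrix.trace, Matrix.trace, map_neg, map_sum]
    simp [hAS]
  · rw [detS, RingHom.map_det]
    have : (constantCoeff (R := L)).mapMatrix
      (1 - (X : PowerSeries L) • A.map C) = 1 := by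
      rw [map_sub, map_one]
      have h0 : (constantCoeff (R := L)).mapMatrix ((X : PowerSeries L) • A.map C) = 0 := by
        ext i j
        simp
      rw [h0, sub_zero]
    rw [this, Matrix.det_one]

end Det
end KatzDwork

namespace KatzDwork

/-! ### Dwork's trace formula -/

section Trace
open MvPolynomial
variable {L : Type*} [NormedField L] {σ : Type*} [Fintype σ] [DecidableEq σ]
set_option linter.unusedSectionVars false

/-- The exponents of total degree at most `D`. -/
@[irreducible] noncomputable def ball (σ : Type*) [Fintype σ] (D : ℕ) : Finset (σ →₀ ℕ) :=
  (Finsupp.finite_of_degree_le (σ := σ) D).toFinset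

lemma mem_ball {D : ℕ} {u : σ →₀ ℕ} : u ∈ ball σ D ↔ u.degree ≤ D := by
  rw [ball]; simp

lemma coeff_eq_zero_of_degree {F : MvPolynomial σ L} {u : σ →₀ ℕ}
    (h : F.totalDegree < u.degree) : coeff u F = 0 := by
  apply coeff_eq_zero_of_totalDegree_lt
  exact h

/-- The product `Φ(X) Φ(X^q) ⋯ Φ(X^{q^{l-1}})`. -/
noncomputable def iterG (q : ℕ) (Φ : MvPolynomial σ L) : ℕ → MvPolynomial σ L
  | 0 => 1
  | l + 1 => Φ * expand q (iterG q Φ l)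

lemma eval_expand' (q : ℕ) (F : MvPolynomial σ L) (x : σ → L) :
    eval x (expand q F) = eval (fun i => x i ^ q) F := by
  induction F using MvPolynomial.induction_on with
  | C a => simp
  | add f g hf hg => simp [hf, hg]
  | mul_X f i hf => simp [hf]

lemma eval_iterG (q : ℕ) (Φ : MvPolynomial σ L) (l : ℕ) (x : σ → L) :
    eval x (iterG q Φ l) = ∏ m ∈ Finset.range l, eval (fun i => x i ^ q ^ m) Φ := by
  induction l generalizing x with
  | zero => simp [iterG]
  | succ l ih =>
    rw [iterG, map_mul, eval_expand', ih, Finset.prod_range_succ']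
    simp only [pow_zero, pow_one]
    rw [mul_comm]
    congr 1
    apply Finset.prod_congr rfl
    intro m _
    congr 2
    ext i
    rw [← pow_mul, pow_succ']

lemma totalDegree_iterG {q D : ℕ} (hq : 1 ≤ q) {Φ : MvPolynomial σ L}
    (hD : Φ.totalDegree ≤ (q - 1) * D) (l : ℕ) :
    (iterG q Φ l).totalDegree ≤ (q ^ l - 1) * D := by
  induction l with
  | zero => simp [iterG]
  | succ l ih =>
    rw [iterG]
    refine (totalDegree_mul _ _).trans ?_
    have h1 := ((totalDegree_expand (iterG q Φ l)).trans (mul_comm _ _)).le.trans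
      (Nat.mul_le_mul_left q ih)
    refine (add_le_add hD h1).trans (le_of_eq ?_)
    obtain ⟨a, rfl⟩ := Nat.exists_eq_add_of_le' hq
    obtain ⟨b, hb⟩ := Nat.exists_eq_add_of_le' (Nat.one_le_pow l (a + 1) (by omega))
    rw [pow_succ, hb]
    have : (b + 1) * (a + 1) - 1 = a + (a + 1) * b := by
      have : (b + 1) * (a + 1) = a + (a + 1) * b + 1 := by ring
      omega
    rw [this]
    simp only [Nat.add_sub_cancel]
    ring

lemma coeff_smul_mul_expand {q : ℕ} (hq : q ≠ 0) {F G : MvPolynomial σ L} {B : Finset (σ →₀ ℕ)}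
    (hB : ∀ x, x ∉ B → coeff (q • x) F = 0) (u : σ →₀ ℕ) :
    coeff (q • u) (F * expand q G) =
      ∑ x ∈ B, coeff (q • x) F * coeff u (monomial x 1 * G) := by
  classical
  induction G using MvPolynomial.induction_on' with
  | monomial s c =>
    rw [expand_monomial, coeff_mul_monomial']
    simp_rw [monomial_mul, one_mul, coeff_monomial]
    have hle : q • s ≤ q • u ↔ s ≤ u := by
      simp only [Finsupp.le_def, Finsupp.smul_apply, smul_eq_mul]
      exact forall_congr' fun i => Nat.mul_le_mul_left_iff (Nat.pos_of_ne_zero hq)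
    by_cases h : s ≤ u
    · have hsub : q • u - q • s = q • (u - s) := by
        ext i; simp [Nat.mul_sub]
      rw [if_pos (hle.mpr h), hsub]
      by_cases hx : u - s ∈ B
      · rw [Finset.sum_eq_single_of_mem (u - s) hx]
        · rw [if_pos (tsub_add_cancel_of_le h)]
        · intro x _ hne
          rw [if_neg, mul_zero]
          rintro rfl
          exact hne (add_tsub_cancel_right x s).symm
      · rw [hB _ hx, zero_mul, Finset.sum_eq_zero]
        intro x hxB
        rw [if_neg, mul_zero]
        rintro rfl
        exact hx (by rwa [add_tsub_cancel_right])
    · rw [if_neg (fun h' => h (hle.mp h')), Finset.sum_eq_zero]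
      intro x _
      rw [if_neg, mul_zero]
      rintro rfl
      exact h le_add_self
  | add f g hf hg =>
    rw [map_add, mul_add, coeff_add, hf, hg, ← Finset.sum_add_distrib]
    apply Finset.sum_congr rfl
    intro x _
    rw [mul_add, coeff_add, mul_add]

/-- The matrix of the operator `G ↦ U_q (Φ G)` on the polynomials with exponents in `B`, where
`U_q` keeps the coefficients of the `q`-th powers. -/
noncomputable def dworkMat (q : ℕ) (Φ : MvPolynomial σ L) (B : Finset (σ →₀ ℕ)) :
    Matrix B B L :=
  fun v w => coeff (q • (w : σ →₀ ℕ)) (monomial (v : σ →₀ ℕ) 1 * Φ)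

lemma dworkMat_pow {q D : ℕ} (hq : 2 ≤ q) {Φ : MvPolynomial σ L}
    (hD : Φ.totalDegree ≤ (q - 1) * D) (l : ℕ) (v w : ball σ D) :
    (dworkMat q Φ (ball σ D) ^ l) v w =
      coeff (q ^ l • (w : σ →₀ ℕ)) (monomial (v : σ →₀ ℕ) 1 * iterG q Φ l) := by
  induction l generalizing v with
  | zero =>
    rw [pow_zero, pow_zero, one_smul, iterG, mul_one, coeff_monomial, Matrix.one_apply]
    simp only [Subtype.ext_iff]
  | succ l ih =>
    rw [pow_succ', Matrix.mul_apply]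
    simp_rw [ih]
    rw [iterG, ← mul_assoc, pow_succ', mul_smul, coeff_smul_mul_expand (by omega) (B := ball σ D)]
    · exact Finset.sum_coe_sort (ball σ D) (fun x => coeff (q • x) (monomial (v : σ →₀ ℕ) 1 * Φ) *
        coeff (q ^ l • (w : σ →₀ ℕ)) (monomial x 1 * iterG q Φ l))
    · intro x hx
      apply coeff_eq_zero_of_degree
      rw [mem_ball, not_le] at hx
      have hv := mem_ball.mp v.2
      refine (totalDegree_mul _ _).trans_lt ?_
      refine (add_le_add (totalDegree_monomial_le _ _) hD).trans_lt ?_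
      change Finsupp.degree (v : σ →₀ ℕ) + _ < _
      rw [map_nsmul, smul_eq_mul]
      obtain ⟨a, rfl⟩ := Nat.exists_eq_add_of_le' hq
      have : (a + 2 - 1) = a + 1 := rfl
      rw [this]
      nlinarith

lemma trace_dworkMat_pow {q D : ℕ} (hq : 2 ≤ q) {Φ : MvPolynomial σ L}
    (hD : Φ.totalDegree ≤ (q - 1) * D) (l : ℕ) :
    (dworkMat q Φ (ball σ D) ^ l).trace =
      ∑ v ∈ ball σ D, coeff ((q ^ l - 1) • v) (iterG q Φ l) := by
  rw [← Finset.sum_coe_sort, Matrix.trace]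
  apply Finset.sum_congr rfl
  intro v _
  rw [Matrix.diag_apply, dworkMat_pow hq hD]
  have : q ^ l • (v : σ →₀ ℕ) = (v : σ →₀ ℕ) + (q ^ l - 1) • (v : σ →₀ ℕ) := by
    have := Nat.one_le_pow l q (by omega)
    rw [← succ_nsmul']
    congr 1; omega
  rw [this, coeff_monomial_mul, one_mul]

lemma sum_nthRoots_pow [CharZero L] [IsAlgClosed L] {M : ℕ} (hM : M ≠ 0) (k : ℕ) :
    ∑ t ∈ Polynomial.nthRootsFinset M (1 : L), t ^ k = if M ∣ k then (M : L) else 0 := by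
  have : NeZero (M : L) := ⟨by exact_mod_cast hM⟩
  have hM' : NeZero M := ⟨hM⟩
  obtain ⟨ζ, hζ⟩ := HasEnoughRootsOfUnity.exists_primitiveRoot L M
  have hpos := Nat.pos_of_ne_zero hM
  split_ifs with h
  · rw [Finset.sum_congr rfl (g := fun _ => (1 : L))]
    · rw [Finset.sum_const, hζ.card_nthRootsFinset]; simp
    · intro t ht
      obtain ⟨j, rfl⟩ := h
      rw [pow_mul, (Polynomial.mem_nthRootsFinset hpos _).mp ht, one_pow]
  · have h1 : ζ ^ k * ∑ t ∈ Polynomial.nthRootsFinset M (1 : L), t ^ k =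
        ∑ t ∈ Polynomial.nthRootsFinset M (1 : L), t ^ k := by
      rw [Finset.mul_sum]
      apply Finset.sum_bij' (fun t _ => ζ * t) (fun t _ => ζ⁻¹ * t)
      · intro t ht
        rw [Polynomial.mem_nthRootsFinset hpos] at ht ⊢
        rw [mul_pow, ht, hζ.pow_eq_one, one_mul]
      · intro t ht
        rw [Polynomial.mem_nthRootsFinset hpos] at ht ⊢
        rw [mul_pow, ht, inv_pow, hζ.pow_eq_one, inv_one, one_mul]
      · intro t _; rw [inv_mul_cancel_left₀ (hζ.ne_zero hM)]
      · intro t _; rw [mul_inv_cancel_left₀ (hζ.ne_zero hM)]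
      · intro t _; rw [mul_pow]
    have h2 : ζ ^ k ≠ 1 := fun h' => h ((hζ.pow_eq_one_iff_dvd k).mp h')
    have h3 : (ζ ^ k - 1) * ∑ t ∈ Polynomial.nthRootsFinset M (1 : L), t ^ k = 0 := by
      rw [sub_mul, h1]; ring
    exact (mul_eq_zero.mp h3).resolve_left (sub_ne_zero.mpr h2)

lemma sum_eval_nthRoots [CharZero L] [IsAlgClosed L] {M D : ℕ} (hM : M ≠ 0)
    {G : MvPolynomial σ L} (hG : G.totalDegree ≤ M * D) :
    ∑ x ∈ Fintype.piFinset fun _ : σ => Polynomial.nthRootsFinset M (1 : L), eval x G =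
      (M : L) ^ Fintype.card σ * ∑ v ∈ ball σ D, coeff (M • v) G := by
  simp_rw [eval_eq']
  rw [Finset.sum_comm]
  have h1 : ∀ u : σ →₀ ℕ, ∑ x ∈ Fintype.piFinset fun _ : σ => Polynomial.nthRootsFinset M (1 : L),
      coeff u G * ∏ i, x i ^ u i = if ∀ i, M ∣ u i then (M : L) ^ Fintype.card σ * coeff u G
        else 0 := by
    intro u
    rw [← Finset.mul_sum, Finset.sum_prod_piFinset _ fun i t => t ^ u i]
    simp_rw [sum_nthRoots_pow hM]
    split_ifs with h
    · simp [h, mul_comm]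
    · push Not at h
      obtain ⟨i, hi⟩ := h
      rw [Finset.prod_eq_zero (Finset.mem_univ i) (by simp [hi]), mul_zero]
  simp_rw [h1]
  rw [← Finset.sum_filter, Finset.mul_sum]
  symm
  have hinj : Set.InjOn (fun v : σ →₀ ℕ => M • v) (ball σ D) := by
    intro v _ w _ h
    ext i
    have := DFunLike.congr_fun h i
    simpa [hM] using this
  rw [← Finset.sum_image (g := fun v : σ →₀ ℕ => M • v)
    (f := fun u => (M : L) ^ Fintype.card σ * coeff u G) hinj]
  symm
  apply Finset.sum_subset
  · intro u hu
    rw [Finset.mem_filter] at hu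
    obtain ⟨hu1, hu2⟩ := hu
    choose f hf using hu2
    have hfu : M • (Finsupp.equivFunOnFinite.symm f) = u := by
      ext i; simp [hf i]
    refine Finset.mem_image.mpr ⟨Finsupp.equivFunOnFinite.symm f, ?_, hfu⟩
    rw [mem_ball]
    have h2 := (le_totalDegree hu1).trans hG
    rw [← hfu] at h2
    change (M • _ : σ →₀ ℕ).degree ≤ _ at h2
    rw [map_nsmul, smul_eq_mul] at h2
    exact Nat.le_of_mul_le_mul_left h2 (Nat.pos_of_ne_zero hM)
  · intro u hu hu'
    rw [Finset.mem_filter, not_and'] at hu'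
    obtain ⟨v, _, rfl⟩ := Finset.mem_image.mp hu
    have := hu' (fun i => by simp)
    rw [notMem_support_iff] at this
    rw [this, mul_zero]

end Trace
end KatzDwork

namespace KatzDwork

/-! ### Convergence of the characteristic series -/

section Fredholm
open MvPolynomial Filter Topology
variable {L : Type*} [NormedField L] [CharZero L] [IsUltrametricDist L]
variable {σ : Type*} [Fintype σ] [DecidableEq σ]
set_option linter.unusedSectionVars false

lemma BdAt.sum {ι : Type*} (s : Finset ι) (f : ι → PowerSeries L) {R K : ℝ} (hR : 0 ≤ R)
    (hK : 0 ≤ K) (h : ∀ i ∈ s, BdAt (f i) R K) : BdAt (∑ i ∈ s, f i) R K := by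
  classical
  induction s using Finset.induction_on with
  | empty => intro k; simpa using hK
  | insert a s ha ih =>
    rw [Finset.sum_insert ha]
    have := (h a (Finset.mem_insert_self _ _)).add hR
      (ih fun i hi => h i (Finset.mem_insert_of_mem hi))
    rwa [max_self] at this

lemma BdAt.prod {ι : Type*} (s : Finset ι) (f : ι → PowerSeries L) {R : ℝ} (K : ι → ℝ)
    (hR : 0 ≤ R) (h : ∀ i ∈ s, BdAt (f i) R (K i)) : BdAt (∏ i ∈ s, f i) R (∏ i ∈ s, K i) := by
  classical
  induction s using Finset.induction_on with
  | empty => simpa using bdAt_C (1 : L) R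
  | insert a s ha ih =>
    rw [Finset.prod_insert ha, Finset.prod_insert ha]
    exact (h a (Finset.mem_insert_self _ _)).mul hR
      (ih fun i hi => h i (Finset.mem_insert_of_mem hi))

lemma BdAt.mono {f : PowerSeries L} {R K K' : ℝ} (h : BdAt f R K) (hK : K ≤ K') : BdAt f R K' :=
  fun k => (h k).trans hK

/-- If the entries of `A` satisfy `|A v w| ≤ ρ^{q|w| - |v|}` then each term of the Leibniz
expansion of `det (1 - X A)` has Gauss norm at most `∏ max (1, R ρ^{(q-1)|w|})`, the factors
`ρ^{|w| - |v|}` cancelling along a permutation. -/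
lemma detS_bdAt {ι : Type*} [Fintype ι] [DecidableEq ι] (wt : ι → ℕ) (A : Matrix ι ι L) {ρ R : ℝ} {q : ℕ}
    (hq : 1 ≤ q) (hρ : 0 < ρ) (hR : 0 ≤ R)
    (hA : ∀ v w, ‖A v w‖ * ρ ^ wt v ≤ ρ ^ (q * wt w)) :
    BdAt (detS A) R (∏ w, max 1 (R * ρ ^ ((q - 1) * wt w))) := by
  set c : ι → ℝ := fun w => max 1 (R * ρ ^ ((q - 1) * wt w)) with hc
  have hentry : ∀ v w, BdAt ((1 - (PowerSeries.X : PowerSeries L) • A.map PowerSeries.C) v w) R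
      (ρ ^ wt w / ρ ^ wt v * c w) := by
    intro v w
    have h1 : (1 - (PowerSeries.X : PowerSeries L) • A.map PowerSeries.C) v w =
        (if v = w then 1 else 0) + PowerSeries.C (-A v w) * PowerSeries.X := by
      rw [Matrix.sub_apply, Matrix.smul_apply, Matrix.one_apply, Matrix.map_apply, smul_eq_mul,
        map_neg]
      ring
    have hX : BdAt (PowerSeries.X : PowerSeries L) R R := by
      intro k
      rw [PowerSeries.coeff_X]
      split_ifs with h
      · simp [h]
      · simpa using hR
    have h2 := (bdAt_C (-A v w) R).mul hR hX
    have h3 : BdAt (if v = w then 1 else 0 : PowerSeries L) R (if v = w then 1 else 0) := by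
      split_ifs
      · simpa using bdAt_C (1 : L) R
      · simpa using bdAt_C (0 : L) R
    rw [h1]
    refine (h3.add hR h2).mono (max_le ?_ ?_)
    · split_ifs with h
      · subst h
        rw [div_self (by positivity), one_mul]
        exact le_max_left _ _
      · positivity
    · rw [norm_neg]
      have h4 : ‖A v w‖ ≤ ρ ^ (q * wt w) / ρ ^ wt v := by
        rw [le_div_iff₀ (by positivity)]; exact hA v w
      have h5 : q * wt w = wt w + (q - 1) * wt w := by
        obtain ⟨a, rfl⟩ := Nat.exists_eq_add_of_le' hq
        simp only [Nat.add_sub_cancel]; ring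
      calc ‖A v w‖ * R ≤ ρ ^ (q * wt w) / ρ ^ wt v * R := by gcongr
        _ = ρ ^ wt w / ρ ^ wt v * (R * ρ ^ ((q - 1) * wt w)) := by rw [h5, pow_add]; ring
        _ ≤ _ := by gcongr; exact le_max_right _ _
  rw [detS, Matrix.det_apply]
  apply BdAt.sum _ _ hR (by positivity)
  intro τ _
  have h1 := BdAt.prod Finset.univ (fun i => (1 - (PowerSeries.X : PowerSeries L) •
    A.map PowerSeries.C) (τ i) i) _ hR (fun i _ => hentry (τ i) i)
  have h2 : ∏ i, (ρ ^ wt i / ρ ^ wt (τ i) * c i) = ∏ i, c i := by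
    rw [Finset.prod_mul_distrib, Finset.prod_div_distrib,
      Equiv.prod_comp τ (fun i => ρ ^ wt i), div_self, one_mul]
    exact Finset.prod_ne_zero_iff.mpr fun i _ => by positivity
  rw [h2] at h1
  rcases Int.units_eq_one_or (Equiv.Perm.sign τ) with h | h
  · rw [h, one_smul]; exact h1
  · rw [h, Units.neg_smul, one_smul]
    intro k
    simpa using h1 k

lemma bound_dworkMat {q : ℕ} {Φ : MvPolynomial σ L} {ρ : ℝ} (hρ : 0 < ρ)
    (hΦ : ∀ u, ‖coeff u Φ‖ ≤ ρ ^ u.degree) (B : Finset (σ →₀ ℕ)) (v w : B) :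
    ‖dworkMat q Φ B v w‖ * ρ ^ (v : σ →₀ ℕ).degree ≤ ρ ^ (q * (w : σ →₀ ℕ).degree) := by
  rw [dworkMat, coeff_monomial_mul']
  split_ifs with h
  · rw [one_mul]
    refine (mul_le_mul_of_nonneg_right (hΦ _) (by positivity)).trans (le_of_eq ?_)
    rw [← pow_add, ← map_add, tsub_add_cancel_of_le h, map_nsmul, smul_eq_mul]
  · rw [norm_zero, zero_mul]; positivity

/-- A bound for the Gauss norm which does not depend on the size of the matrix. -/
lemma detS_dworkMat_bdAt {q : ℕ} (hq : 2 ≤ q) {ρ R : ℝ} (hρ : 0 < ρ) (hρ1 : ρ < 1)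
    (hR : 0 ≤ R) : ∃ K, ∀ (Φ : MvPolynomial σ L) (D : ℕ), (∀ u, ‖coeff u Φ‖ ≤ ρ ^ u.degree) →
      BdAt (detS (dworkMat q Φ (ball σ D))) R K := by
  obtain ⟨W, hW⟩ := exists_pow_lt_of_lt_one (show (0 : ℝ) < (R + 1)⁻¹ by positivity) hρ1
  refine ⟨(max 1 R) ^ (ball σ W).card, fun Φ D hΦ => ?_⟩
  have h0 := detS_bdAt (fun v : ball σ D => (v : σ →₀ ℕ).degree) (dworkMat q Φ (ball σ D))
    (q := q) (by omega) hρ hR (bound_dworkMat hρ hΦ _)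
  refine h0.mono ?_
  have h1 : ∀ w : σ →₀ ℕ, max 1 (R * ρ ^ ((q - 1) * w.degree)) ≤
      if w ∈ ball σ W then max 1 R else 1 := by
    intro w
    have hle1 : ρ ^ ((q - 1) * w.degree) ≤ 1 := pow_le_one₀ hρ.le hρ1.le
    split_ifs with h
    · apply max_le_max le_rfl
      calc R * _ ≤ R * 1 := by gcongr
        _ = R := mul_one R
    · rw [mem_ball, not_le] at h
      apply max_le le_rfl
      have h2 : ρ ^ ((q - 1) * w.degree) ≤ ρ ^ W := by
        apply pow_le_pow_of_le_one hρ.le hρ1.le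
        have : 1 ≤ q - 1 := by omega
        nlinarith
      calc R * ρ ^ ((q - 1) * w.degree) ≤ R * (R + 1)⁻¹ := by gcongr; exact h2.trans hW.le
        _ ≤ 1 := by
          rw [← div_eq_mul_inv, div_le_one (by positivity)]; linarith
  calc _ ≤ ∏ w : ball σ D, (if (w : σ →₀ ℕ) ∈ ball σ W then max 1 R else 1) :=
        Finset.prod_le_prod (fun _ _ => by positivity) fun w _ => h1 w
    _ = ∏ w ∈ ball σ D, (if w ∈ ball σ W then max 1 R else 1) :=
        Finset.prod_coe_sort (ball σ D) (fun w => if w ∈ ball σ W then max 1 R else 1)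
    _ = (max 1 R) ^ ((ball σ D).filter (· ∈ ball σ W)).card := by
        rw [← Finset.prod_filter, Finset.prod_const]
    _ ≤ _ := by
        apply pow_le_pow_right₀ (le_max_left _ _)
        apply Finset.card_le_card
        intro w hw
        exact (Finset.mem_filter.mp hw).2

variable [IsAlgClosed L]

/-- The toric sums `S_l = ∑_x Φ(x) Φ(x^q) ⋯ Φ(x^{q^{l-1}})` over `x ∈ μ_{q^l - 1}^σ`, where `Φ` is
a limit of polynomials with coefficients uniformly bounded by `ρ^|u|`, `ρ < 1`, have a
meromorphic zeta series. -/
lemma mero_of_tendsto {q : ℕ} (hq : 2 ≤ q) {ρ : ℝ} (hρ : 0 < ρ) (hρ1 : ρ < 1)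
    (Φ : ℕ → MvPolynomial σ L) (hΦ : ∀ N u, ‖coeff u (Φ N)‖ ≤ ρ ^ u.degree) (S : ℕ → L)
    (hS : ∀ l, 1 ≤ l → Tendsto (fun N =>
      ∑ x ∈ Fintype.piFinset fun _ : σ => Polynomial.nthRootsFinset (q ^ l - 1) (1 : L),
        ∏ m ∈ Finset.range l, eval (fun i => x i ^ q ^ m) (Φ N)) atTop (𝓝 (S l))) :
    Mero S := by
  set T : ℕ → L := fun l => S l / ((q : L) ^ l - 1) ^ Fintype.card σ with hT
  have hq1 : ∀ l, 1 ≤ l → 2 ≤ q ^ l := fun l hl => hq.trans (Nat.le_self_pow (by omega) q)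
  have hqc : ∀ l, 1 ≤ l → ((q ^ l - 1 : ℕ) : L) = (q : L) ^ l - 1 := by
    intro l hl
    rw [Nat.cast_sub (by have := hq1 l hl; omega)]; simp
  have hq0 : ∀ l, 1 ≤ l → ((q : L) ^ l - 1) ^ Fintype.card σ ≠ 0 := by
    intro l hl
    rw [← hqc l hl]
    have := hq1 l hl
    exact pow_ne_zero _ (by exact_mod_cast (by omega : q ^ l - 1 ≠ 0))
  set D : ℕ → ℕ := fun N => (Φ N).totalDegree with hD
  set A := fun N => dworkMat q (Φ N) (ball σ (D N)) with hA
  have hDle : ∀ N, (Φ N).totalDegree ≤ (q - 1) * D N := fun N =>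
    Nat.le_mul_of_pos_left _ (by omega)
  have htr : ∀ l, 1 ≤ l → Tendsto (fun N => (A N ^ l).trace) atTop (𝓝 (T l)) := by
    intro l hl
    refine ((hS l hl).div_const (((q : L) ^ l - 1) ^ Fintype.card σ)).congr fun N => ?_
    have hAN : A N = dworkMat q (Φ N) (ball σ (D N)) := rfl
    rw [div_eq_iff (hq0 l hl), hAN, trace_dworkMat_pow hq (hDle N), ← hqc l hl, mul_comm,
      ← sum_eval_nthRoots (by have := hq1 l hl; omega)
        (totalDegree_iterG (by omega) (hDle N) l)]
    apply Finset.sum_congr rfl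
    intro x _
    rw [eval_iterG]
  have hmer : Mero (-T) := by
    apply mero_of_entire
    intro R hR
    obtain ⟨K, hK⟩ := detS_dworkMat_bdAt (L := L) (σ := σ) hq hρ hρ1 hR
    refine ⟨K, fun k => ?_⟩
    have hlim : Tendsto (fun N => PowerSeries.coeff k (detS (A N))) atTop
        (𝓝 (PowerSeries.coeff k (Zs (-T)))) := by
      simp_rw [detS_eq]
      apply tendsto_coeff_Ex
      intro k hk
      simp only [Ls, PowerSeries.coeff_mk]
      exact (htr k hk).neg.div_const _
    exact le_of_tendsto (hlim.norm.mul_const (R ^ k)) (Eventually.of_forall fun N =>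
      hK _ _ (hΦ N) k)
  have h2 := hmer.neg
  rw [neg_neg] at h2
  refine (h2.sub_one_pow_mul (q : L) (Fintype.card σ)).congr fun l hl => ?_
  rw [hT]
  field_simp [hq0 l hl]

end Fredholm
end KatzDwork

namespace KatzDwork

/-! ### Dwork's lemma and the Artin–Hasse exponential -/

section ArtinHasse
open PowerSeries
variable (p : ℕ) [hp : Fact p.Prime]
set_option linter.unusedSectionVars false

lemma norm_natCast_padic {n : ℕ} (hn : n ≠ 0) :
    ‖(n : ℚ_[p])‖ = ((p : ℝ) ^ padicValNat p n)⁻¹ := by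
  rw [Padic.norm_eq_zpow_neg_valuation (by exact_mod_cast hn), Padic.valuation_natCast, zpow_neg,
    zpow_natCast]

/-- The series `∑ X^{p^i} / p^i`. -/
noncomputable def ahLog : PowerSeries ℚ_[p] := by
  classical
  exact PowerSeries.mk fun n => if ∃ i, n = p ^ i then (n : ℚ_[p])⁻¹ else 0

lemma coeff_ahLog_pow (i : ℕ) : coeff (p ^ i) (ahLog p) = ((p : ℚ_[p]) ^ i)⁻¹ := by
  rw [ahLog, coeff_mk, if_pos ⟨i, rfl⟩, Nat.cast_pow]

lemma coeff_ahLog_of_not {n : ℕ} (h : ¬ ∃ i, n = p ^ i) : coeff n (ahLog p) = 0 := by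
  rw [ahLog, coeff_mk, if_neg h]

lemma ahLog_eq : p • ahLog p = C (p : ℚ_[p]) * X + expand p hp.out.ne_zero (ahLog p) := by
  ext n
  have hp0 : (p : ℚ_[p]) ≠ 0 := by exact_mod_cast hp.out.ne_zero
  rw [map_add, coeff_C_mul, coeff_X, map_nsmul, nsmul_eq_mul, ahLog, coeff_mk]
  by_cases h1 : n = 1
  · subst h1
    rw [if_pos ⟨0, by simp⟩, coeff_expand_of_not_dvd]
    · simp
    · exact fun h => hp.out.one_lt.ne' (Nat.dvd_one.mp h)
  · by_cases hd : p ∣ n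
    · obtain ⟨k, rfl⟩ := hd
      rw [coeff_expand_mul, coeff_mk, if_neg h1, mul_zero, zero_add]
      by_cases hk : ∃ i, k = p ^ i
      · obtain ⟨i, rfl⟩ := hk
        rw [if_pos ⟨i + 1, by rw [pow_succ']⟩, if_pos ⟨i, rfl⟩]
        push_cast
        field_simp
      · rw [if_neg hk, if_neg, mul_zero]
        rintro ⟨i, hi⟩
        rcases i with _ | i
        · exact h1 (by simpa using hi)
        · rw [pow_succ'] at hi
          exact hk ⟨i, Nat.eq_of_mul_eq_mul_left hp.out.pos hi⟩
    · rw [coeff_expand_of_not_dvd _ _ _ hd, if_neg h1, if_neg]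
      · simp
      · rintro ⟨i, rfl⟩
        rcases i with _ | i
        · exact h1 (by simp)
        · exact hd (dvd_pow_self p (Nat.succ_ne_zero i))

lemma coeff_Ex_C_mul_X {L : Type*} [Field L] [CharZero L] (c : L) (k : ℕ) :
    coeff k (Ex (C c * X)) = c ^ k / (k.factorial : L) := by
  have := Ex_C_mul_X_pow c 1 one_ne_zero
  rw [pow_one] at this
  rw [this, PowerSeries.expand_one_apply, coeff_rescale, coeff_exp]
  simp [div_eq_mul_inv]

lemma norm_coeff_exp_p {k : ℕ} (hk : k ≠ 0) :
    ‖coeff k (Ex (C (p : ℚ_[p]) * X))‖ ≤ (p : ℝ)⁻¹ := by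
  have hp1 : (1 : ℝ) < p := by exact_mod_cast hp.out.one_lt
  rw [coeff_Ex_C_mul_X, norm_div, norm_pow, Padic.norm_p,
    norm_natCast_padic p (Nat.factorial_ne_zero k)]
  have h := padicValNat_factorial_lt_of_ne_zero p hk
  rw [div_inv_eq_mul, inv_pow, inv_mul_le_iff₀ (by positivity), ← div_eq_mul_inv,
    le_div_iff₀ (by positivity), ← pow_succ]
  exact pow_le_pow_right₀ hp1.le h

lemma norm_coeff_pow_sub_expand (F : Polynomial ℤ_[p]) (n : ℕ) :
    ‖(F ^ p - Polynomial.expand ℤ_[p] p F).coeff n‖ ≤ (p : ℝ)⁻¹ := by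
  have h1 : (F ^ p - Polynomial.expand ℤ_[p] p F).map PadicInt.toZMod = 0 := by
    rw [Polynomial.map_sub, Polynomial.map_pow, Polynomial.map_expand, ZMod.expand_card, sub_self]
  have h2 := congrArg (fun P => Polynomial.coeff P n) h1
  simp only [Polynomial.coeff_map, Polynomial.coeff_zero] at h2
  have h3 : (F ^ p - Polynomial.expand ℤ_[p] p F).coeff n ∈
      RingHom.ker (PadicInt.toZMod : ℤ_[p] →+* ZMod p) := h2
  rw [PadicInt.ker_toZMod, PadicInt.maximalIdeal_eq_span_p] at h3
  have := (PadicInt.norm_le_pow_iff_mem_span_pow _ 1).mpr (by simpa using h3)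
  simpa using this

/-- The coefficients of the Artin–Hasse exponential are `p`-adic integers. With `E` the series,
`E(X)^p = exp(pX) E(X^p)`, and `F(X)^p ≡ F(X^p)` modulo `p` for `F` integral; the two combine to
an induction on the degree. -/
lemma norm_coeff_artinHasse (n : ℕ) : ‖coeff n (Ex (ahLog p))‖ ≤ 1 := by
  have hp0 : (p : ℚ_[p]) ≠ 0 := by exact_mod_cast hp.out.ne_zero
  have hpr : (0 : ℝ) < p := by exact_mod_cast hp.out.pos
  set E := Ex (ahLog p) with hE
  have hEp : E ^ p = Ex (C (p : ℚ_[p]) * X) * expand p hp.out.ne_zero E := by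
    rw [hE, ← Ex_nsmul, ahLog_eq, Ex_add, Ex_expand]
  have hE0 : constantCoeff E = 1 := constantCoeff_Ex _
  induction n using Nat.strong_induction_on with
  | _ n ih =>
  rcases Nat.eq_zero_or_pos n with rfl | hn
  · rw [coeff_zero_eq_constantCoeff_apply, hE0, norm_one]
  -- an integral lift of the truncation of `E`
  obtain ⟨F, hF⟩ : ∃ F : Polynomial ℤ_[p], F.map (PadicInt.Coe.ringHom) = trunc n E := by
    have : trunc n E ∈ Polynomial.lifts (PadicInt.Coe.ringHom (p := p)) := by
      rw [Polynomial.lifts_iff_coeff_lifts]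
      intro k
      rw [coeff_trunc]
      split_ifs with hk
      · exact ⟨⟨coeff k E, ih k hk⟩, rfl⟩
      · exact ⟨0, by simp⟩
    exact (Polynomial.mem_lifts _).mp this
  set T : PowerSeries ℚ_[p] := ((trunc n E : Polynomial ℚ_[p]) : PowerSeries ℚ_[p]) with hT
  have hT0 : constantCoeff T = 1 := by
    rw [← coeff_zero_eq_constantCoeff_apply, hT, Polynomial.coeff_coe, coeff_trunc, if_pos hn,
      coeff_zero_eq_constantCoeff_apply, hE0]
  obtain ⟨H, hH, hH0⟩ : ∃ H, E = X ^ n * H + T ∧ constantCoeff H = coeff n E :=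
    ⟨_, eq_X_pow_mul_shift_add_trunc n E, by simp [← coeff_zero_eq_constantCoeff_apply]⟩
  -- the coefficient of `X ^ n` in `E ^ p - T ^ p`
  have h1 : coeff n (E ^ p) - coeff n (T ^ p) = p * coeff n E := by
    have h2 := geom_sum₂_mul E T p
    have h3 : E - T = X ^ n * H := by rw [hH]; ring
    rw [h3] at h2
    rw [← map_sub, ← h2]
    rw [show ∀ a : PowerSeries ℚ_[p], a * (X ^ n * H) = X ^ n * (a * H) by intro a; ring]
    have h4 := coeff_X_pow_mul ((∑ i ∈ Finset.range p, E ^ i * T ^ (p - 1 - i)) * H) n 0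
    rw [zero_add] at h4
    rw [h4, coeff_zero_eq_constantCoeff_apply, map_mul, hH0, map_sum]
    simp [hE0, hT0]
  have h2 : coeff n (T ^ p) - coeff n (expand p hp.out.ne_zero T) =
      (((F ^ p - Polynomial.expand ℤ_[p] p F).coeff n : ℤ_[p]) : ℚ_[p]) := by
    have e1 : (((F ^ p - Polynomial.expand ℤ_[p] p F).coeff n : ℤ_[p]) : ℚ_[p]) =
        ((F ^ p - Polynomial.expand ℤ_[p] p F).map PadicInt.Coe.ringHom).coeff n := by
      rw [Polynomial.coeff_map]; rfl
    rw [e1, Polynomial.map_sub, Polynomial.map_pow, Polynomial.map_expand, hF, Polynomial.coeff_sub,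
      hT, ← Polynomial.coe_pow, Polynomial.coeff_coe]
    congr 1
    rw [coeff_expand, Polynomial.coeff_expand hp.out.pos]
    simp only [Polynomial.coeff_coe]
  have hlt : n / p < n := Nat.div_lt_self hn hp.out.one_lt
  have h3 : coeff n (expand p hp.out.ne_zero T) = coeff n (expand p hp.out.ne_zero E) := by
    rw [coeff_expand, coeff_expand, hT, Polynomial.coeff_coe, coeff_trunc, if_pos hlt]
  have h4 : ‖coeff n (E ^ p) - coeff n (expand p hp.out.ne_zero E)‖ ≤ (p : ℝ)⁻¹ := by
    rw [hEp, coeff_mul, ← Finset.add_sum_erase _ _ (show (0, n) ∈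
      Finset.HasAntidiagonal.antidiagonal n by simp)]
    simp only [coeff_zero_Ex, one_mul, add_sub_cancel_left]
    apply IsUltrametricDist.norm_sum_le_of_forall_le_of_nonneg (by positivity)
    intro ij hij
    obtain ⟨hne, hij⟩ := Finset.mem_erase.mp hij
    have hsum := Finset.HasAntidiagonal.mem_antidiagonal.mp hij
    have hi : ij.1 ≠ 0 := by
      intro h
      apply hne
      ext
      · exact h
      · simp at *; omega
    rw [norm_mul]
    have hb : ‖coeff ij.2 (expand p hp.out.ne_zero E)‖ ≤ 1 := by
      rw [coeff_expand]
      split_ifs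
      · exact ih _ ((Nat.div_le_self _ _).trans_lt (by omega))
      · simp
    calc _ ≤ (p : ℝ)⁻¹ * 1 := mul_le_mul (norm_coeff_exp_p p hi) hb (norm_nonneg _) (by positivity)
      _ = _ := mul_one _
  have h5 : ‖(p : ℚ_[p]) * coeff n E‖ ≤ (p : ℝ)⁻¹ := by
    have e : (p : ℚ_[p]) * coeff n E = (coeff n (E ^ p) - coeff n (expand p hp.out.ne_zero E)) -
        (coeff n (T ^ p) - coeff n (expand p hp.out.ne_zero T)) := by
      rw [← h1, h3]; ring
    rw [e, sub_eq_add_neg]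
    refine (IsUltrametricDist.norm_add_le_max _ _).trans (max_le h4 ?_)
    rw [norm_neg, h2]
    exact norm_coeff_pow_sub_expand p F n
  rw [norm_mul, Padic.norm_p, mul_le_iff_le_one_right (by positivity)] at h5
  exact h5

end ArtinHasse
end KatzDwork

namespace KatzDwork

/-! ### Dwork's splitting function -/

section Splitting
open PowerSeries
variable (p : ℕ) [hp : Fact p.Prime] {L : Type*} [NormedField L] [NormedAlgebra ℚ_[p] L]
  [IsUltrametricDist L] [CharZero L]
set_option linter.unusedSectionVars false

include hp in
lemma norm_natCast_eq (n : ℕ) : ‖(n : L)‖ = ‖(n : ℚ_[p])‖ := by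
  rw [← map_natCast (algebraMap ℚ_[p] L), norm_algebraMap']

lemma map_Ex (f : PowerSeries ℚ_[p]) :
    PowerSeries.map (algebraMap ℚ_[p] L) (Ex f) = Ex (PowerSeries.map (algebraMap ℚ_[p] L) f) := by
  have hd : ∀ g : PowerSeries ℚ_[p], d⁄dX L (PowerSeries.map (algebraMap ℚ_[p] L) g) =
      PowerSeries.map (algebraMap ℚ_[p] L) (d⁄dX ℚ_[p] g) := by
    intro g
    ext n
    simp [coeff_derivative]
  apply eq_Ex_of_derivative
  · rw [hd, hd, derivative_Ex, map_mul]
  · rw [← coeff_zero_eq_constantCoeff_apply, coeff_map, coeff_zero_Ex, map_one]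

/-- `θ(X) = exp(π (X - X^p))`. -/
noncomputable def theta (π : L) : PowerSeries L := Ex (C π * X - C π * X ^ p)

variable {p} {π : L} (hπ : π ^ (p - 1) = -(p : L))

/-- The radius `R = p ^ (1 / p²) > 1`. -/
noncomputable def rad (p : ℕ) : ℝ := (p : ℝ) ^ (((p ^ 2 : ℕ) : ℝ)⁻¹)

include hp in
lemma rad_pow : rad p ^ (p ^ 2) = p :=
  Real.rpow_inv_natCast_pow (Nat.cast_nonneg p) (pow_ne_zero 2 hp.out.ne_zero)

include hp in
lemma one_lt_rad : 1 < rad p := by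
  apply Real.one_lt_rpow
  · exact_mod_cast hp.out.one_lt
  · have := hp.out.pos
    positivity

include hp hπ in
lemma norm_pi_pow : ‖π‖ ^ (p - 1) = (p : ℝ)⁻¹ := by
  rw [← norm_pow, hπ, norm_neg, norm_natCast_eq p, Padic.norm_p]

include hp hπ in
lemma norm_pi_pos : 0 < ‖π‖ := by
  rw [norm_pos_iff]
  rintro rfl
  have h1 := hp.out.one_lt
  have h2 := hp.out.ne_zero
  rw [zero_pow (by omega)] at hπ
  exact h2 (by exact_mod_cast (neg_eq_zero.mp hπ.symm))

include hp hπ in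
lemma norm_pi_lt_one : ‖π‖ < 1 := by
  have h := norm_pi_pow (p := p) hπ
  by_contra hc
  push Not at hc
  have h1 := one_le_pow₀ hc (n := p - 1)
  rw [h] at h1
  have hp1 : (1 : ℝ) < p := by exact_mod_cast hp.out.one_lt
  exact absurd h1 (not_le.mpr (inv_lt_one_of_one_lt₀ hp1))

include hp in
lemma pow_eq_geom (i : ℕ) : p ^ i = (p - 1) * (∑ j ∈ Finset.range i, p ^ j) + 1 := by
  obtain ⟨r, hr⟩ : ∃ r, p = r + 1 := ⟨p - 1, by have := hp.out.one_lt; omega⟩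
  induction i with
  | zero => simp
  | succ i ih =>
    rw [Finset.sum_range_succ, pow_succ, mul_add, add_right_comm, ← ih, hr]
    simp; ring

include hp in
lemma le_geom (i : ℕ) : (i + 2) + p ^ i ≤ ∑ j ∈ Finset.range (i + 2), p ^ j := by
  have h2 := hp.out.two_le
  induction i with
  | zero => simp [Finset.sum_range_succ]; omega
  | succ i ih =>
    rw [Finset.sum_range_succ]
    have h3 : p ^ (i + 2) = p * p ^ (i + 1) := by ring
    have h4 : 1 ≤ p ^ (i + 1) := Nat.one_le_pow _ _ (by omega)
    nlinarith [Nat.one_le_pow i p (by omega)]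

include hp hπ in
lemma norm_pi_pow_pow (i : ℕ) :
    ‖π‖ ^ p ^ i = ((p : ℝ)⁻¹) ^ (∑ j ∈ Finset.range i, p ^ j) * ‖π‖ := by
  rw [pow_eq_geom i, pow_succ, pow_mul, norm_pi_pow hπ]

include hp hπ in
lemma norm_factorial_ge {k : ℕ} (hk : k ≠ 0) : ‖π‖ ^ k ≤ ‖(k.factorial : L)‖ * ‖π‖ := by
  rw [norm_natCast_eq p, norm_natCast_padic p (Nat.factorial_ne_zero k), ← inv_pow,
    ← norm_pi_pow hπ, ← pow_mul, ← pow_succ]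
  apply pow_le_pow_of_le_one (norm_nonneg _) (norm_pi_lt_one hπ).le
  exact sub_one_mul_padicValNat_factorial_lt_of_ne_zero p hk

/-- Constant term `1`, and all other coefficients small on the disc of radius `R`. -/
def Near (h : PowerSeries L) (R w : ℝ) : Prop :=
  coeff 0 h = 1 ∧ ∀ k, 1 ≤ k → ‖coeff k h‖ * R ^ k ≤ w

lemma Near.bdAt {h : PowerSeries L} {R w : ℝ} (hw : w ≤ 1) (hh : Near h R w) : BdAt h R 1 := by
  intro k
  rcases Nat.eq_zero_or_pos k with rfl | hk
  · simp [hh.1]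
  · exact (hh.2 k hk).trans hw

lemma Near.mul {f g : PowerSeries L} {R w : ℝ} (hR : 0 ≤ R) (hw0 : 0 ≤ w) (hw : w ≤ 1)
    (hf : Near f R w) (hg : Near g R w) : Near (f * g) R w := by
  refine ⟨by rw [coeff_mul]; simp [hf.1, hg.1], fun k hk => ?_⟩
  have : ‖coeff k (f * g)‖ * R ^ k = ‖coeff k (f * g)‖ * ‖R ^ k‖ := by
    rw [Real.norm_of_nonneg (by positivity)]
  obtain ⟨ij, hij, hle⟩ := IsUltrametricDist.exists_norm_finsetSum_le_of_nonempty
    (t := Finset.HasAntidiagonal.antidiagonal k) ⟨(0, k), by simp⟩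
    (fun ij => coeff ij.1 f * coeff ij.2 g)
  rw [← coeff_mul] at hle
  have hs := Finset.HasAntidiagonal.mem_antidiagonal.mp hij
  refine (mul_le_mul_of_nonneg_right hle (by positivity)).trans ?_
  rw [norm_mul, ← hs, pow_add, mul_mul_mul_comm]
  by_cases h1 : 1 ≤ ij.1
  · calc _ ≤ w * 1 := mul_le_mul (hf.2 _ h1) (hg.bdAt hw _) (by positivity) hw0
      _ = w := mul_one w
  · calc _ ≤ 1 * w := mul_le_mul (hf.bdAt hw _) (hg.2 _ (by omega)) (by positivity) zero_le_one
      _ = w := one_mul w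

lemma Near.one {R w : ℝ} (hw0 : 0 ≤ w) : Near (1 : PowerSeries L) R w := by
  refine ⟨by simp, fun k hk => ?_⟩
  rw [coeff_one, if_neg (by omega)]
  simpa using hw0

lemma Near.prod {ι : Type*} (s : Finset ι) {f : ι → PowerSeries L} {R w : ℝ} (hR : 0 ≤ R)
    (hw0 : 0 ≤ w) (hw : w ≤ 1) (hf : ∀ i ∈ s, Near (f i) R w) : Near (∏ i ∈ s, f i) R w := by
  classical
  induction s using Finset.induction_on with
  | empty => simpa using Near.one hw0
  | insert a s ha ih =>
    rw [Finset.prod_insert ha]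
    exact Near.mul hR hw0 hw (hf a (by simp)) (ih fun i hi => hf i (by simp [hi]))

include hp hπ in
/-- `exp(c X^N)` is close to `1` on a disc of radius `R` with `|c| R^N ≤ |π|`. -/
lemma near_Ex {c : L} {N : ℕ} (hN : N ≠ 0) {R : ℝ} (hR : 0 ≤ R) (h : ‖c‖ * R ^ N ≤ ‖π‖) :
    Near (Ex (C c * X ^ N)) R ‖π‖ := by
  refine ⟨coeff_zero_Ex _, fun n hn => ?_⟩
  rw [Ex_C_mul_X_pow c N hN]
  by_cases hd : N ∣ n
  · obtain ⟨k, rfl⟩ := hd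
    have hk : k ≠ 0 := by rintro rfl; simp at hn
    rw [coeff_expand_mul, coeff_rescale, coeff_exp, map_div₀, map_one, map_natCast, norm_mul,
      norm_div, norm_one, norm_pow, mul_one_div, div_mul_eq_mul_div, pow_mul, ← mul_pow]
    have hf : 0 < ‖(k.factorial : L)‖ := by
      rw [norm_pos_iff]; exact_mod_cast Nat.factorial_ne_zero k
    rw [div_le_iff₀ hf]
    calc _ ≤ ‖π‖ ^ k := pow_le_pow_left₀ (by positivity) h k
      _ ≤ _ := by rw [mul_comm]; exact norm_factorial_ge hπ hk
  · rw [coeff_expand_of_not_dvd _ _ _ hd]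
    simp

include hp hπ in
lemma near_tail (i : ℕ) :
    Near (Ex (C (-(π ^ p ^ (i + 2) / (p : L) ^ (i + 2))) * X ^ p ^ (i + 2))) (rad p) ‖π‖ := by
  have hp0 : (0 : ℝ) < p := by exact_mod_cast hp.out.pos
  have hR := one_lt_rad (p := p)
  apply near_Ex hπ (pow_ne_zero _ hp.out.ne_zero) (by linarith)
  rw [norm_neg, norm_div, norm_pow, norm_pow, norm_natCast_eq p, Padic.norm_p,
    norm_pi_pow_pow hπ, show p ^ (i + 2) = p ^ 2 * p ^ i by ring, pow_mul, rad_pow, inv_pow, inv_pow,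
    div_inv_eq_mul]
  have hle : (p : ℝ) ^ (i + 2) * (p : ℝ) ^ p ^ i ≤ (p : ℝ) ^ ∑ j ∈ Finset.range (i + 2), p ^ j := by
    rw [← pow_add]
    exact pow_le_pow_right₀ (by exact_mod_cast hp.out.one_lt.le) (le_geom i)
  have hpos : 0 < (p : ℝ) ^ ∑ j ∈ Finset.range (i + 2), p ^ j := by positivity
  calc _ = ((p : ℝ) ^ (i + 2) * (p : ℝ) ^ p ^ i) / (p : ℝ) ^ (∑ j ∈ Finset.range (i + 2), p ^ j)
        * ‖π‖ := by field_simp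
    _ ≤ 1 * ‖π‖ := by
      gcongr
      exact (div_le_one hpos).mpr hle
    _ = _ := one_mul _

include hπ in
/-- Up to any given degree, `θ` is the Artin–Hasse exponential at `πX` times factors
close to `1`. -/
lemma exists_theta_factor (n : ℕ) : ∃ A B : PowerSeries L, coeff n (theta p π) = coeff n (A * B) ∧
    (∀ k, ‖coeff k A‖ ≤ ‖π‖ ^ k) ∧ Near B (rad p) ‖π‖ := by
  have hp0 : (p : L) ≠ 0 := by exact_mod_cast hp.out.ne_zero
  have hR := one_lt_rad (p := p)
  refine ⟨Ex (rescale π (PowerSeries.map (algebraMap ℚ_[p] L) (ahLog p))),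
    ∏ i ∈ Finset.range n, Ex (C (-(π ^ p ^ (i + 2) / (p : L) ^ (i + 2))) * X ^ p ^ (i + 2)),
    ?_, ?_, ?_⟩
  · rw [← Ex_sum, ← Ex_add, theta]
    refine coeff_Ex_congr (N := n) (fun k hk hkn => ?_) n le_rfl
    rw [map_sub, coeff_C_mul, coeff_C_mul, coeff_X, coeff_X_pow, map_add, coeff_rescale, coeff_map,
      map_sum]
    simp only [coeff_C_mul, coeff_X_pow]
    have hinj : ∀ {i j : ℕ}, p ^ i = p ^ j ↔ i = j := fun {i j} =>
      Nat.pow_right_inj hp.out.one_lt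
    by_cases hex : ∃ i, k = p ^ i
    · obtain ⟨i, rfl⟩ := hex
      rw [coeff_ahLog_pow, map_inv₀, map_pow, map_natCast]
      have e1 : (p ^ i = 1) ↔ i = 0 := by simpa using hinj (i := i) (j := 0)
      have e2 : (p ^ i = p) ↔ i = 1 := by simpa using hinj (i := i) (j := 1)
      simp only [e1, e2, hinj]
      rcases i with _ | _ | i
      · simp
      · have hpp : π ^ p = -(p : L) * π := by
          rw [← hπ, ← pow_succ, Nat.sub_add_cancel hp.out.one_le]
        simp [hpp]
        field_simp
      · have hi : i ∈ Finset.range n := by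
          rw [Finset.mem_range]
          have := Nat.lt_pow_self (n := i) hp.out.one_lt
          have h3 : p ^ i ≤ p ^ (i + 1 + 1) := Nat.pow_le_pow_right hp.out.pos (by omega)
          omega
        rw [Finset.sum_eq_single_of_mem i hi]
        · simp
          field_simp
          ring
        · intro j _ hj
          rw [if_neg (by omega), mul_zero]
    · rw [coeff_ahLog_of_not p hex, if_neg (fun h => hex ⟨0, by simpa using h⟩),
        if_neg (fun h => hex ⟨1, by simpa using h⟩), Finset.sum_eq_zero]
      · simp
      · intro i _
        rw [if_neg (fun h => hex ⟨_, h⟩), mul_zero]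
  · intro k
    rw [Ex_rescale, ← map_Ex, coeff_rescale, coeff_map, norm_mul, norm_pow, norm_algebraMap']
    exact mul_le_of_le_one_right (by positivity) (norm_coeff_artinHasse p k)
  · exact Near.prod _ (by linarith) (norm_nonneg _) (norm_pi_lt_one hπ).le fun i _ => near_tail hπ i

include hp hπ in
lemma norm_pi_mul_rad : ‖π‖ * rad p ≤ 1 := by
  have hR := one_lt_rad (p := p)
  have hp1 : (1 : ℝ) < p := by exact_mod_cast hp.out.one_lt
  rw [← pow_le_one_iff_of_nonneg (by positivity) (pow_ne_zero 2 hp.out.ne_zero), mul_pow, rad_pow,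
    norm_pi_pow_pow hπ]
  simp only [Finset.sum_range_succ, Finset.sum_range_zero, pow_zero, pow_one, zero_add, pow_add]
  have h1 : ((p : ℝ)⁻¹) ^ p * ‖π‖ ≤ 1 := mul_le_one₀
    (pow_le_one₀ (by positivity) (inv_le_one_of_one_le₀ hp1.le)) (norm_nonneg _)
    (norm_pi_lt_one hπ).le
  calc _ = ((p : ℝ)⁻¹) ^ p * ‖π‖ := by field_simp
    _ ≤ 1 := h1

include hπ in
/-- `θ` converges on a disc strictly larger than the unit disc. -/
lemma theta_bdAt : BdAt (theta p π) (rad p) 1 := by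
  intro n
  have hR := one_lt_rad (p := p)
  obtain ⟨A, B, h, hA, hB⟩ := exists_theta_factor hπ n
  have hA' : BdAt A (rad p) 1 := by
    intro k
    calc _ ≤ ‖π‖ ^ k * rad p ^ k := by gcongr; exact hA k
      _ ≤ 1 := by
        rw [← mul_pow]
        exact pow_le_one₀ (by positivity) (norm_pi_mul_rad hπ)
  rw [h]
  simpa using BdAt.mul (by linarith) hA' (hB.bdAt (norm_pi_lt_one hπ).le) n

include hπ in
lemma theta_small {n : ℕ} (hn : 2 ≤ n) :
    ‖coeff n (theta p π)‖ ≤ max (‖π‖ ^ 2) (‖π‖ / rad p) := by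
  have hR := one_lt_rad (p := p)
  have hπ1 := (norm_pi_lt_one hπ).le
  obtain ⟨A, B, h, hA, hB⟩ := exists_theta_factor hπ n
  rw [h, coeff_mul]
  apply IsUltrametricDist.norm_sum_le_of_forall_le_of_nonneg (by positivity)
  intro ij hij
  have hs := Finset.HasAntidiagonal.mem_antidiagonal.mp hij
  rw [norm_mul]
  rcases Nat.eq_zero_or_pos ij.2 with h0 | h0
  · rw [h0, hB.1, norm_one, mul_one]
    refine (hA _).trans (le_max_of_le_left ?_)
    exact pow_le_pow_of_le_one (norm_nonneg _) hπ1 (by omega)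
  · apply le_max_of_le_right
    have h1 := hB.2 _ h0
    calc _ ≤ 1 * (‖π‖ / rad p) := by
          apply mul_le_mul ((hA _).trans (pow_le_one₀ (norm_nonneg _) hπ1)) _ (norm_nonneg _)
            zero_le_one
          rw [le_div_iff₀ (by linarith)]
          refine le_trans ?_ h1
          gcongr
          exact le_self_pow₀ hR.le (by omega)
      _ = _ := one_mul _

include hp hπ in
lemma delta_lt : max (‖π‖ ^ 2) (‖π‖ / rad p) < ‖π‖ := by
  have h0 := norm_pi_pos (p := p) hπ
  have hR := one_lt_rad (p := p)
  apply max_lt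
  · rw [sq]; exact mul_lt_of_lt_one_right h0 (norm_pi_lt_one hπ)
  · exact div_lt_self h0 hR

include hp in
lemma coeff_one_theta : coeff 1 (theta p π) = π := by
  rw [theta, coeff_succ_Ex]
  simp [coeff_zero_Ex, coeff_X_pow, hp.out.one_lt.ne]

end Splitting
end KatzDwork

namespace KatzDwork

/-! ### The additive character attached to the splitting function -/

section Character
open PowerSeries
variable {p : ℕ} [hp : Fact p.Prime] {L : Type*} [NormedField L] [NormedAlgebra ℚ_[p] L]
  [IsUltrametricDist L] [CharZero L] [CompleteSpace L] {π : L} (hπ : π ^ (p - 1) = -(p : L))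
set_option linter.unusedSectionVars false

variable (p π) in
/-- `ψ_m(t) = ∏_{i < m} θ(t^{p^i})`. On the roots of `t^{p^m} = t`, this is an additive character
of the residue field. -/
noncomputable def psi (m : ℕ) (t : L) : L := ∏ i ∈ Finset.range m, ev (t ^ p ^ i) (theta p π)

lemma rescale_C' (a c : L) : rescale a (C c) = C c := by
  ext n
  rw [coeff_rescale, coeff_C]
  split_ifs with h <;> simp [h]

lemma ev_prod_sumAt {ι : Type*} (s : Finset ι) (f : ι → PowerSeries L) (z : L)
    (hf : ∀ i ∈ s, SumAt z (f i)) :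
    SumAt z (∏ i ∈ s, f i) ∧ ev z (∏ i ∈ s, f i) = ∏ i ∈ s, ev z (f i) := by
  classical
  induction s using Finset.induction_on with
  | empty => exact ⟨by simpa using sumAt_C z (1 : L), by simp [ev_one]⟩
  | insert a s ha ih =>
    obtain ⟨h1, h2⟩ := ih fun i hi => hf i (by simp [hi])
    rw [Finset.prod_insert ha, Finset.prod_insert ha, ev_mul (hf a (by simp)) h1, h2]
    exact ⟨(hf a (by simp)).mul h1, rfl⟩

include hπ in
lemma sumAt_theta {s : L} (hs : ‖s‖ ≤ 1) : SumAt s (theta p π) :=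
  (theta_bdAt hπ).sumAt (hs.trans_lt one_lt_rad)

include hπ in
/-- Telescoping: `ψ_m(t)` is the value at `1` of `exp(π (t X - t^{p^m} X^{p^m}))`. -/
lemma psi_eq (m : ℕ) {t : L} (ht : ‖t‖ ≤ 1) :
    SumAt 1 (Ex (C (π * t) * X - C (π * t ^ p ^ m) * X ^ p ^ m)) ∧
    psi p π m t = ev 1 (Ex (C (π * t) * X - C (π * t ^ p ^ m) * X ^ p ^ m)) := by
  have hp0 : ∀ i, p ^ i ≠ 0 := fun i => pow_ne_zero i hp.out.ne_zero
  have e : Ex (C (π * t) * X - C (π * t ^ p ^ m) * X ^ p ^ m) =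
      ∏ i ∈ Finset.range m, expand (p ^ i) (hp0 i) (rescale (t ^ p ^ i) (theta p π)) := by
    have e1 : ∀ i, expand (p ^ i) (hp0 i) (rescale (t ^ p ^ i) (theta p π)) =
        Ex (C (π * t ^ p ^ i) * X ^ p ^ i - C (π * t ^ p ^ (i + 1)) * X ^ p ^ (i + 1)) := by
      intro i
      rw [theta, ← Ex_rescale, ← Ex_expand]
      congr 1
      simp only [map_sub, map_mul, map_pow, rescale_X, expand_C, expand_X, rescale_C', mul_pow,
        ← pow_mul, ← pow_succ]
      ring
    simp_rw [e1]
    rw [← Ex_sum, Finset.sum_range_sub']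
    simp
  have hs : ∀ i ∈ Finset.range m,
      SumAt 1 (expand (p ^ i) (hp0 i) (rescale (t ^ p ^ i) (theta p π))) := by
    intro i _
    apply SumAt.expand
    apply SumAt.rescale
    apply sumAt_theta hπ
    simpa using pow_le_one₀ (norm_nonneg _) ht
  obtain ⟨h1, h2⟩ := ev_prod_sumAt _ _ _ hs
  rw [e]
  refine ⟨h1, ?_⟩
  rw [h2, psi]
  refine Finset.prod_congr rfl fun i _ => ?_
  rw [ev_expand, ev_rescale]
  simp

include hπ in
lemma sumAt_Ex_small {w : L} (hw : ‖w‖ < 1) : SumAt 1 (Ex (C (π * w) * X)) := by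
  have h := near_Ex hπ (c := π * w) one_ne_zero (R := 2 / (1 + ‖w‖)) (by positivity) (by
    rw [norm_mul, pow_one, mul_assoc]
    apply mul_le_of_le_one_right (norm_nonneg _)
    rw [mul_div_assoc', div_le_one (by positivity)]
    linarith)
  rw [pow_one] at h
  apply (h.bdAt (norm_pi_lt_one hπ).le).sumAt
  rw [norm_one, lt_div_iff₀ (by positivity)]
  linarith

include hπ in
/-- Additivity of `ψ_m`: it turns sums modulo the maximal ideal into products. -/
lemma psi_add {m : ℕ} {x y z : L} (hx : ‖x‖ ≤ 1) (hy : ‖y‖ ≤ 1) (hz : ‖z‖ ≤ 1)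
    (hx' : x ^ p ^ m = x) (hy' : y ^ p ^ m = y) (hz' : z ^ p ^ m = z) (h : ‖x + y - z‖ < 1) :
    psi p π m x * psi p π m y = psi p π m z := by
  obtain ⟨sx, ex⟩ := psi_eq hπ m hx
  obtain ⟨sy, ey⟩ := psi_eq hπ m hy
  obtain ⟨sz, ez⟩ := psi_eq hπ m hz
  rw [hx'] at sx ex
  rw [hy'] at sy ey
  rw [hz'] at sz ez
  have hp0 : p ^ m ≠ 0 := pow_ne_zero m hp.out.ne_zero
  set w := x + y - z with hw
  have s1 := sumAt_Ex_small hπ h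
  have s2 := sumAt_Ex_small hπ (w := -w) (by rwa [norm_neg])
  have s3 : SumAt 1 (expand (p ^ m) hp0 (Ex (C (π * -w) * X))) :=
    SumAt.expand hp0 (by rwa [one_pow])
  have h1 : ev 1 (Ex (C (π * w) * X)) * ev 1 (Ex (C (π * -w) * X)) = 1 := by
    rw [← ev_mul s1 s2, ← Ex_add, show C (π * w) * X + C (π * -w) * X = (0 : PowerSeries L) by
      rw [mul_neg, map_neg]; ring, Ex_zero, ev_one]
  rw [ex, ey, ez, ← ev_mul sx sy]
  have e : Ex (C (π * x) * X - C (π * x) * X ^ p ^ m) * Ex (C (π * y) * X - C (π * y) * X ^ p ^ m) =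
      Ex (C (π * z) * X - C (π * z) * X ^ p ^ m) * (Ex (C (π * w) * X) *
        expand (p ^ m) hp0 (Ex (C (π * -w) * X))) := by
    rw [← Ex_expand, ← Ex_add, ← Ex_add, ← Ex_add]
    congr 1
    simp only [map_mul, expand_C, expand_X, hw, map_neg, map_sub, map_add]
    ring
  rw [e, ev_mul sz (s1.mul s3), ev_mul s1 s3, ev_expand, one_pow, h1, mul_one]

include hπ in
lemma norm_ev_theta_sub {s : L} (hs : ‖s‖ ≤ 1) :
    ‖ev s (theta p π) - 1 - π * s‖ ≤ max (‖π‖ ^ 2) (‖π‖ / rad p) := by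
  have hsum : Summable fun k => coeff k (theta p π) * s ^ k := (sumAt_theta hπ hs).of_norm
  have h := hsum.sum_add_tsum_nat_add 2
  have h0 : coeff 0 (theta p π) = 1 := coeff_zero_Ex _
  rw [Finset.sum_range_succ, Finset.sum_range_one, h0, coeff_one_theta] at h
  rw [ev, ← h]
  rw [show ∀ a : L, 1 * s ^ 0 + π * s ^ 1 + a - 1 - π * s = a by intro a; ring]
  apply IsUltrametricDist.norm_tsum_le_of_forall_le_of_nonneg (by positivity)
  intro k
  rw [norm_mul, norm_pow]
  exact (mul_le_of_le_one_right (norm_nonneg _) (pow_le_one₀ (norm_nonneg _) hs)).trans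
    (theta_small hπ (by omega))

include hπ in
lemma norm_psi_sub (m : ℕ) {t : L} (ht : ‖t‖ ≤ 1) :
    ‖psi p π m t - 1 - π * ∑ i ∈ Finset.range m, t ^ p ^ i‖ ≤ max (‖π‖ ^ 2) (‖π‖ / rad p) := by
  set δ := max (‖π‖ ^ 2) (‖π‖ / rad p) with hδ
  have hδ1 : δ < ‖π‖ := delta_lt hπ
  have hδ2 : ‖π‖ ^ 2 ≤ δ := le_max_left _ _
  have hti : ∀ i, ‖t ^ p ^ i‖ ≤ 1 := fun i => by
    rw [norm_pow]; exact pow_le_one₀ (norm_nonneg _) ht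
  have hmul : ∀ {a : L}, ‖a‖ ≤ 1 → ‖π * a‖ ≤ ‖π‖ := fun {a} ha => by
    rw [norm_mul]; exact mul_le_of_le_one_right (norm_nonneg _) ha
  induction m with
  | zero =>
    simp only [psi, Finset.range_zero, Finset.prod_empty, Finset.sum_empty, mul_zero, sub_self,
      norm_zero]
    positivity
  | succ m ih =>
    have ha := norm_ev_theta_sub hπ (hti m)
    rw [← hδ] at ha
    have ha1 : ‖ev (t ^ p ^ m) (theta p π) - 1‖ ≤ ‖π‖ := by
      rw [show ev (t ^ p ^ m) (theta p π) - 1 = (ev (t ^ p ^ m) (theta p π) - 1 - π * t ^ p ^ m) +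
        π * t ^ p ^ m by ring]
      exact (IsUltrametricDist.norm_add_le_max _ _).trans
        (max_le (ha.trans hδ1.le) (hmul (hti m)))
    have hP : ‖psi p π m t - 1‖ ≤ ‖π‖ := by
      rw [show psi p π m t - 1 = (psi p π m t - 1 - π * ∑ i ∈ Finset.range m, t ^ p ^ i) +
        π * ∑ i ∈ Finset.range m, t ^ p ^ i by ring]
      refine (IsUltrametricDist.norm_add_le_max _ _).trans
        (max_le (ih.trans hδ1.le) (hmul ?_))
      exact IsUltrametricDist.norm_sum_le_of_forall_le_of_nonneg zero_le_one fun i _ => hti i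
    have e : psi p π (m + 1) t - 1 - π * ∑ i ∈ Finset.range (m + 1), t ^ p ^ i =
        ((psi p π m t - 1 - π * ∑ i ∈ Finset.range m, t ^ p ^ i) +
        (ev (t ^ p ^ m) (theta p π) - 1 - π * t ^ p ^ m)) +
        (psi p π m t - 1) * (ev (t ^ p ^ m) (theta p π) - 1) := by
      rw [psi, Finset.prod_range_succ, ← psi, Finset.sum_range_succ]
      ring
    rw [e]
    refine (IsUltrametricDist.norm_add_le_max _ _).trans (max_le
      ((IsUltrametricDist.norm_add_le_max _ _).trans (max_le ih ha)) ?_)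
    rw [norm_mul]
    refine le_trans ?_ hδ2
    rw [sq]
    exact mul_le_mul hP ha1 (norm_nonneg _) (norm_nonneg _)

include hπ in
/-- `ψ_m(t) = 1` forces the trace of `t` to vanish in the residue field. -/
lemma norm_trace_lt_of_psi_eq_one {m : ℕ} {t : L} (ht : ‖t‖ ≤ 1) (h : psi p π m t = 1) :
    ‖∑ i ∈ Finset.range m, t ^ p ^ i‖ < 1 := by
  have h1 := (norm_psi_sub hπ m ht).trans_lt (delta_lt hπ)
  rw [h, sub_self, zero_sub, norm_neg, norm_mul] at h1
  exact (mul_lt_iff_lt_one_right (norm_pi_pos hπ)).mp h1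

end Character
end KatzDwork

namespace KatzDwork

/-! ### Teichmüller representatives -/

section Teichmuller
variable {p : ℕ} [hp : Fact p.Prime]
set_option linter.unusedSectionVars false

lemma pow_sub_one_of_pow_eq {F : Type*} [Field F] {x : F} {Q : ℕ} (hQ : 2 ≤ Q) :
    x ^ Q = x ↔ x = 0 ∨ x ^ (Q - 1) = 1 := by
  obtain ⟨r, rfl⟩ : ∃ r, Q = r + 1 := ⟨Q - 1, by omega⟩
  rw [Nat.add_sub_cancel, pow_succ]
  constructor
  · intro h
    by_cases hx : x = 0
    · exact Or.inl hx
    · exact Or.inr (mul_right_cancel₀ hx (by rw [h, one_mul]))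
  · rintro (rfl | h)
    · simp
    · rw [h, one_mul]

lemma two_le_pow {m : ℕ} (hm : 1 ≤ m) : 2 ≤ p ^ m :=
  hp.out.two_le.trans (Nat.le_self_pow (by omega) p)

lemma pow_pow_mul {F : Type*} [Monoid F] {x : F} {Q : ℕ} (h : x ^ Q = x) (j : ℕ) :
    x ^ Q ^ j = x := by
  induction j with
  | zero => simp
  | succ j ih => rw [pow_succ, pow_mul, ih, h]

lemma card_nthRootsFinset_of_ne {F : Type*} [Field F] [IsAlgClosed F] {M : ℕ}
    (hM : (M : F) ≠ 0) : (Polynomial.nthRootsFinset M (1 : F)).card = M := by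
  have : NeZero (M : F) := ⟨hM⟩
  have : NeZero M := ⟨by rintro rfl; simp at hM⟩
  obtain ⟨ζ, hζ⟩ := HasEnoughRootsOfUnity.exists_primitiveRoot F M
  exact hζ.card_nthRootsFinset

variable {L : Type*} [NormedField L] [NormedAlgebra ℚ_[p] L] [IsUltrametricDist L] [CharZero L]
  {K : Type*} [Field K] [IsAlgClosed K] [CharP K p]

lemma norm_eq_one_of_pow {t : L} {Q : ℕ} (hQ : 2 ≤ Q) (h : t ^ Q = t) (h0 : t ≠ 0) : ‖t‖ = 1 := by
  have h1 := ((pow_sub_one_of_pow_eq hQ).mp h).resolve_left h0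
  have h2 := congrArg norm h1
  rw [norm_pow, norm_one] at h2
  exact (pow_eq_one_iff_of_nonneg (norm_nonneg _) (by omega)).mp h2

lemma norm_le_one_of_pow {t : L} {Q : ℕ} (hQ : 2 ≤ Q) (h : t ^ Q = t) : ‖t‖ ≤ 1 := by
  by_cases h0 : t = 0
  · simp [h0]
  · exact (norm_eq_one_of_pow hQ h h0).le

variable (p L K) in
/-- Reduction modulo the maximal ideal, on the integers of `L` whose residue is algebraic over the
prime field, with values in `K`. -/
lemma exists_reduction : ∃ (B : Subring L) (ρ : B →+* K), (∀ b : B, ρ b = 0 ↔ ‖(b : L)‖ < 1) ∧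
    ∀ (t : L) (m : ℕ), 1 ≤ m → t ^ p ^ m = t → t ∈ B := by
  let v := NormedField.valuation (K := L)
  let O := v.valuationSubring
  let k := IsLocalRing.ResidueField O
  have hres : ∀ b : O, IsLocalRing.residue O b = 0 ↔ ‖(b : L)‖ < 1 := by
    intro b
    rw [IsLocalRing.residue_eq_zero_iff, IsLocalRing.mem_maximalIdeal, mem_nonunits_iff,
      (Valuation.valuationSubring.integers v).isUnit_iff_valuation_eq_one]
    have h1 : v (b : L) ≤ 1 := b.2
    have h2 : v (b : L) = ‖(b : L)‖₊ := NormedField.valuation_apply _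
    change ¬ v (b : L) = 1 ↔ _
    rw [h2] at h1 ⊢
    have h3 : ‖(b : L)‖ < 1 ↔ ‖(b : L)‖₊ < 1 := by
      rw [← NNReal.coe_lt_coe]; simp
    rw [h3]
    exact ⟨fun h => lt_of_le_of_ne h1 h, fun h => h.ne⟩
  have : CharP k p := by
    rw [CharP.charP_iff_prime_eq_zero hp.out]
    have h1 := (hres (p : O)).mpr (by
      have : ((p : O) : L) = (p : L) := by simp
      rw [this, norm_natCast_eq p, Padic.norm_p]
      exact inv_lt_one_of_one_lt₀ (by exact_mod_cast hp.out.one_lt))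
    simpa using h1
  let _ : Algebra (ZMod p) k := ZMod.algebra k p
  let _ : Algebra (ZMod p) K := ZMod.algebra K p
  let A := algebraicClosure (ZMod p) k
  let ι : A →ₐ[ZMod p] K := IsAlgClosed.lift
  let B' : Subring O := A.toSubring.comap (IsLocalRing.residue O)
  let r : B' →+* A := ((IsLocalRing.residue O).comp B'.subtype).codRestrict A (fun b => b.2)
  let B : Subring L := B'.map O.subtype
  let e : B' ≃+* B := B'.equivMapOfInjective O.subtype Subtype.val_injective
  refine ⟨B, (ι : A →+* K).comp (r.comp (e.symm : B →+* B')), ?_, ?_⟩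
  · intro b
    obtain ⟨b, rfl⟩ := e.surjective b
    have h1 : ((e b : B) : L) = ((b : O) : L) := rfl
    rw [h1, ← hres]
    have h2 : ((ι : A →+* K).comp (r.comp (e.symm : B →+* B'))) (e b) = ι (r b) := by simp
    rw [h2, map_eq_zero_iff ι ι.toRingHom.injective, ← Subtype.coe_inj]
    rfl
  · intro t m hm ht
    have htO : t ∈ O := by
      change v t ≤ 1
      rw [NormedField.valuation_apply]
      exact norm_le_one_of_pow (two_le_pow (p := p) hm) ht
    refine ⟨⟨t, htO⟩, ?_, rfl⟩
    change IsLocalRing.residue O ⟨t, htO⟩ ∈ A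
    rw [mem_algebraicClosure_iff]
    refine ⟨Polynomial.X ^ p ^ m - Polynomial.X, ?_, ?_⟩
    · exact FiniteField.X_pow_card_pow_sub_X_ne_zero _ (by omega) hp.out.one_lt
    · have : (⟨t, htO⟩ : O) ^ p ^ m = ⟨t, htO⟩ := Subtype.ext ht
      rw [map_sub, map_pow, Polynomial.aeval_X, ← map_pow, this, sub_self]

variable (p) in
/-- The Teichmüller map: `τ x` is the root of `t^{p^m} = t` in `L` reducing to the
root `x` of `x^{p^m} = x` in `K`. -/
structure Teich (τ : K → L) : Prop where
  pow : ∀ m, 1 ≤ m → ∀ x, x ^ p ^ m = x → τ x ^ p ^ m = τ x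
  mul : ∀ m, 1 ≤ m → ∀ x y, x ^ p ^ m = x → y ^ p ^ m = y → τ (x * y) = τ x * τ y
  add : ∀ m, 1 ≤ m → ∀ x y, x ^ p ^ m = x → y ^ p ^ m = y → ‖τ x + τ y - τ (x + y)‖ < 1
  zero : τ 0 = 0
  inj : ∀ m, 1 ≤ m → ∀ x y, x ^ p ^ m = x → y ^ p ^ m = y → τ x = τ y → x = y
  surj : ∀ m, 1 ≤ m → ∀ t, t ^ p ^ m = t → ∃ x, x ^ p ^ m = x ∧ τ x = t

variable (p L K) in
lemma exists_teich [IsAlgClosed L] : ∃ τ : K → L, Teich p τ := by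
  classical
  obtain ⟨B, ρ, hρ, hB⟩ := exists_reduction p L K
  let f : L → K := fun t => if h : t ∈ B then ρ ⟨t, h⟩ else 0
  have hf : ∀ b : B, f b = ρ b := fun b => dif_pos b.2
  have hfm : ∀ {s t : L}, s ∈ B → t ∈ B → f (s * t) = f s * f t := fun {s t} hs ht => by
    simpa [← map_mul] using (hf (⟨s, hs⟩ * ⟨t, ht⟩)).trans (by
      rw [map_mul, ← hf, ← hf])
  have hfp : ∀ {s : L} (_ : s ∈ B) (n : ℕ), f (s ^ n) = f s ^ n := fun {s} hs n =>
    (hf (⟨s, hs⟩ ^ n)).trans (by rw [map_pow, ← hf])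
  have hfs : ∀ {s t : L}, s ∈ B → t ∈ B → f (s - t) = f s - f t := fun {s t} hs ht =>
    (hf (⟨s, hs⟩ - ⟨t, ht⟩)).trans (by rw [map_sub, ← hf, ← hf])
  have hfa : ∀ {s t : L}, s ∈ B → t ∈ B → f (s + t) = f s + f t := fun {s t} hs ht =>
    (hf (⟨s, hs⟩ + ⟨t, ht⟩)).trans (by rw [map_add, ← hf, ← hf])
  have hf0 : ∀ {s : L}, s ∈ B → (f s = 0 ↔ ‖s‖ < 1) := fun {s} hs => by
    rw [show f s = ρ ⟨s, hs⟩ from hf ⟨s, hs⟩, hρ]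
  have hK : ∀ m, 1 ≤ m → ((p ^ m - 1 : ℕ) : K) = -1 := by
    intro m hm
    rw [Nat.cast_sub (by have := two_le_pow (p := p) hm; omega), Nat.cast_pow,
      CharP.cast_eq_zero, zero_pow (by omega)]
    simp
  -- a root of unity of order prime to `p` which reduces to `1` equals `1`
  have hone : ∀ m, 1 ≤ m → ∀ u : L, u ^ p ^ m = u → u ≠ 0 → f u = 1 → u = 1 := by
    intro m hm u hu hu0 hfu
    have huB := hB u m hm hu
    have h1 := ((pow_sub_one_of_pow_eq (two_le_pow (p := p) hm)).mp hu).resolve_left hu0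
    have h2 := geom_sum_mul u (p ^ m - 1)
    rw [h1, sub_self] at h2
    rcases mul_eq_zero.mp h2 with h3 | h3
    · exfalso
      have h4 : ρ (∑ i ∈ Finset.range (p ^ m - 1), (⟨u, huB⟩ : B) ^ i) = -1 := by
        have : ρ ⟨u, huB⟩ = 1 := by rw [← hf]; exact hfu
        rw [map_sum]
        simp only [map_pow, this, one_pow, Finset.sum_const, Finset.card_range, nsmul_eq_mul, mul_one]
        exact hK m hm
      have h5 : (∑ i ∈ Finset.range (p ^ m - 1), (⟨u, huB⟩ : B) ^ i) = 0 := by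
        apply Subtype.ext
        simpa using h3
      rw [h5, map_zero] at h4
      exact one_ne_zero (neg_eq_zero.mp h4.symm)
    · exact sub_eq_zero.mp h3
  have hinj0 : ∀ m, 1 ≤ m → ∀ t : L, t ^ p ^ m = t → f t = 0 → t = 0 := by
    intro m hm t ht h
    by_contra h0
    have := (hf0 (hB t m hm ht)).mp h
    rw [norm_eq_one_of_pow (two_le_pow (p := p) hm) ht h0] at this
    exact lt_irrefl _ this
  have hinj : ∀ m, 1 ≤ m → ∀ s t : L, s ^ p ^ m = s → t ^ p ^ m = t → f s = f t → s = t := by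
    intro m hm s t hs ht h
    by_cases h0 : t = 0
    · have : f t = 0 := by rw [hf0 (hB t m hm ht), h0]; simp
      rw [h0]
      exact hinj0 m hm s hs (h.trans this)
    · have hft : f t ≠ 0 := fun h' => h0 (hinj0 m hm t ht h')
      have hs0 : s ≠ 0 := by
        rintro rfl
        apply hft
        rw [← h, hf0 (hB 0 m hm hs)]; simp
      have hu : (s / t) ^ p ^ m = s / t := by rw [div_pow, hs, ht]
      have h1 := hfm (hB _ m hm hu) (hB t m hm ht)
      rw [div_mul_cancel₀ _ h0, h] at h1
      have h2 : f (s / t) = 1 := mul_right_cancel₀ hft (by rw [← h1, one_mul])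
      exact (div_eq_one_iff_eq h0).mp (hone m hm _ hu (div_ne_zero hs0 h0) h2)
  -- counting the roots of unity on both sides gives surjectivity
  have hsurj : ∀ m, 1 ≤ m → ∀ x : K, x ^ p ^ m = x → ∃ t : L, t ^ p ^ m = t ∧ f t = x := by
    intro m hm x hx
    have h2 := two_le_pow (p := p) hm
    have hpos : 0 < p ^ m - 1 := by omega
    by_cases h0 : x = 0
    · have hz : (0 : L) ^ p ^ m = 0 := zero_pow (by omega)
      refine ⟨0, hz, ?_⟩
      rw [h0, hf0 (hB 0 m hm hz)]; simp
    · have key := Finset.surjOn_of_injOn_of_card_le (s := Polynomial.nthRootsFinset (p ^ m - 1) (1 : L))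
        (t := Polynomial.nthRootsFinset (p ^ m - 1) (1 : K)) f ?_ ?_ ?_
      · have hx1 := ((pow_sub_one_of_pow_eq h2).mp hx).resolve_left h0
        obtain ⟨t, ht, rfl⟩ := key ((Polynomial.mem_nthRootsFinset hpos _).mpr hx1)
        have ht' := (Polynomial.mem_nthRootsFinset hpos _).mp ht
        exact ⟨t, (pow_sub_one_of_pow_eq h2).mpr (Or.inr ht'), rfl⟩
      · intro t ht
        have ht' := (Polynomial.mem_nthRootsFinset hpos _).mp ht
        have htB := hB t m hm ((pow_sub_one_of_pow_eq h2).mpr (Or.inr ht'))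
        have h1B : (1 : L) ∈ B := B.one_mem
        have hf1 : f 1 = 1 := (hf 1).trans (map_one ρ)
        apply (Polynomial.mem_nthRootsFinset hpos _).mpr
        rw [← hfp htB, ht', hf1]
      · intro s hs t ht h
        have hs' := (Polynomial.mem_nthRootsFinset hpos _).mp hs
        have ht' := (Polynomial.mem_nthRootsFinset hpos _).mp ht
        exact hinj m hm s t ((pow_sub_one_of_pow_eq h2).mpr (Or.inr hs'))
          ((pow_sub_one_of_pow_eq h2).mpr (Or.inr ht')) h
      · rw [card_nthRootsFinset_of_ne, card_nthRootsFinset_of_ne]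
        · exact_mod_cast hpos.ne'
        · rw [hK m hm]; exact neg_ne_zero.mpr one_ne_zero
  let τ : K → L := fun x => if h : ∃ t : L, (∃ m, 1 ≤ m ∧ t ^ p ^ m = t) ∧ f t = x then h.choose
    else 0
  have hinj' : ∀ s t : L, (∃ m, 1 ≤ m ∧ s ^ p ^ m = s) → (∃ m, 1 ≤ m ∧ t ^ p ^ m = t) →
      f s = f t → s = t := by
    rintro s t ⟨m, hm, hs⟩ ⟨m', hm', ht⟩ h
    refine hinj (m * m') (Nat.mul_pos hm hm') s t ?_ ?_ h
    · rw [pow_mul]; exact pow_pow_mul hs m'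
    · rw [mul_comm, pow_mul]; exact pow_pow_mul ht m
  have hτ : ∀ m, 1 ≤ m → ∀ t : L, t ^ p ^ m = t → τ (f t) = t := by
    intro m hm t ht
    have hex : ∃ s : L, (∃ m, 1 ≤ m ∧ s ^ p ^ m = s) ∧ f s = f t := ⟨t, ⟨m, hm, ht⟩, rfl⟩
    have : τ (f t) = hex.choose := dif_pos hex
    rw [this]
    exact hinj' _ _ hex.choose_spec.1 ⟨m, hm, ht⟩ hex.choose_spec.2
  refine ⟨τ, ?_, ?_, ?_, ?_, ?_, ?_⟩
  · intro m hm x hx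
    obtain ⟨t, ht, rfl⟩ := hsurj m hm x hx
    rw [hτ m hm t ht, ht]
  · intro m hm x y hx hy
    obtain ⟨s, hs, rfl⟩ := hsurj m hm x hx
    obtain ⟨t, ht, rfl⟩ := hsurj m hm y hy
    rw [← hfm (hB s m hm hs) (hB t m hm ht), hτ m hm s hs, hτ m hm t ht,
      hτ m hm (s * t) (by rw [mul_pow, hs, ht])]
  · intro m hm x y hx hy
    have hxy : (x + y) ^ p ^ m = x + y := by rw [add_pow_char_pow, hx, hy]
    obtain ⟨u, hu, hu'⟩ := hsurj m hm (x + y) hxy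
    obtain ⟨s, hs, rfl⟩ := hsurj m hm x hx
    obtain ⟨t, ht, rfl⟩ := hsurj m hm y hy
    have hsB := hB s m hm hs
    have htB := hB t m hm ht
    have huB := hB u m hm hu
    rw [← hu', hτ m hm s hs, hτ m hm t ht, hτ m hm u hu, ← hf0 (B.sub_mem (B.add_mem hsB htB) huB),
      hfs (B.add_mem hsB htB) huB, hfa hsB htB, hu', sub_self]
  · have hz : (0 : L) ^ p ^ 1 = 0 := zero_pow (by have := two_le_pow (p := p) (m := 1) le_rfl; omega)
    have h0 : f 0 = 0 := by rw [hf0 B.zero_mem]; simp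
    have := hτ 1 le_rfl 0 hz
    rwa [h0] at this
  · intro m hm x y hx hy h
    obtain ⟨s, hs, rfl⟩ := hsurj m hm x hx
    obtain ⟨t, ht, rfl⟩ := hsurj m hm y hy
    rw [hτ m hm s hs, hτ m hm t ht] at h
    rw [h]
  · intro m hm t ht
    have htB := hB t m hm ht
    exact ⟨f t, by rw [← hfp htB, ht], hτ m hm t ht⟩

end Teichmuller
end KatzDwork

namespace KatzDwork

/-! ### Additive characters of the finite subfields of `K` -/

section FiniteCharacter
variable {p : ℕ} [hp : Fact p.Prime]
  {L : Type*} [NormedField L] [NormedAlgebra ℚ_[p] L] [IsUltrametricDist L] [CharZero L]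
  [CompleteSpace L]
  {K : Type*} [Field K] [IsAlgClosed K] [CharP K p]
  {π : L} (hπ : π ^ (p - 1) = -(p : L)) {τ : K → L} (hτ : Teich p τ)
set_option linter.unusedSectionVars false

/-- The set of roots of `x ^ Q = x` in `K` (for `Q ≥ 2`). -/
noncomputable def fq (K : Type*) [Field K] [DecidableEq K] (Q : ℕ) : Finset K :=
  insert 0 (Polynomial.nthRootsFinset (Q - 1) (1 : K))

lemma mem_fq [DecidableEq K] {Q : ℕ} (hQ : 2 ≤ Q) {x : K} : x ∈ fq K Q ↔ x ^ Q = x := by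
  rw [fq, Finset.mem_insert, Polynomial.mem_nthRootsFinset (by omega), pow_sub_one_of_pow_eq hQ]

variable (p K) in
lemma cast_pow_sub_one {m : ℕ} (hm : 1 ≤ m) : ((p ^ m - 1 : ℕ) : K) = -1 := by
  rw [Nat.cast_sub (by have := two_le_pow (p := p) hm; omega), Nat.cast_pow,
    CharP.cast_eq_zero, zero_pow (by omega)]
  simp

lemma zero_notMem_nthRootsFinset {Q : ℕ} (hQ : 2 ≤ Q) :
    (0 : K) ∉ Polynomial.nthRootsFinset (Q - 1) (1 : K) := by
  rw [Polynomial.mem_nthRootsFinset (by omega), zero_pow (by omega)]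
  exact zero_ne_one

lemma card_fq [DecidableEq K] {m : ℕ} (hm : 1 ≤ m) : (fq K (p ^ m)).card = p ^ m := by
  have h2 := two_le_pow (p := p) hm
  rw [fq, Finset.card_insert_of_notMem (zero_notMem_nthRootsFinset h2), card_nthRootsFinset_of_ne]
  · omega
  · rw [cast_pow_sub_one p K hm]; exact neg_ne_zero.mpr one_ne_zero

variable (p π τ) in
/-- The additive character of the subfield of `K` with `p^m` elements. -/
noncomputable def chi (m : ℕ) (x : K) : L := psi p π m (τ x)

include hπ hτ in
lemma chi_add {m : ℕ} (hm : 1 ≤ m) {x y : K} (hx : x ^ p ^ m = x) (hy : y ^ p ^ m = y) :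
    chi p π τ m (x + y) = chi p π τ m x * chi p π τ m y := by
  have h2 := two_le_pow (p := p) hm
  have hxy : (x + y) ^ p ^ m = x + y := by rw [add_pow_char_pow, hx, hy]
  have h1 := hτ.pow m hm x hx
  have h3 := hτ.pow m hm y hy
  have h4 := hτ.pow m hm _ hxy
  exact (psi_add hπ (norm_le_one_of_pow h2 h1) (norm_le_one_of_pow h2 h3)
    (norm_le_one_of_pow h2 h4) h1 h3 h4 (hτ.add m hm x y hx hy)).symm

include hπ hτ in
lemma chi_zero {m : ℕ} : chi p π τ m (0 : K) = 1 := by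
  rw [chi, hτ.zero, (psi_eq hπ m (by simp)).2, zero_pow (pow_ne_zero m hp.out.ne_zero)]
  simp [Ex_zero, ev_one]

include hπ hτ in
lemma chi_sum {m : ℕ} (hm : 1 ≤ m) {ι : Type*} (s : Finset ι) (x : ι → K)
    (hx : ∀ i ∈ s, x i ^ p ^ m = x i) :
    (∑ i ∈ s, x i) ^ p ^ m = ∑ i ∈ s, x i ∧
    chi p π τ m (∑ i ∈ s, x i) = ∏ i ∈ s, chi p π τ m (x i) := by
  classical
  induction s using Finset.induction_on with
  | empty => simp [chi_zero hπ hτ, hp.out.ne_zero]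
  | insert a s ha ih =>
    obtain ⟨h1, h2⟩ := ih fun i hi => hx i (by simp [hi])
    have h3 := hx a (by simp)
    rw [Finset.sum_insert ha, Finset.prod_insert ha, chi_add hπ hτ hm h3 h1, h2,
      add_pow_char_pow, h3, h1]
    exact ⟨rfl, rfl⟩

include hπ hτ in
/-- The character is nontrivial: otherwise the trace polynomial `∑ X^{p^i}`, of degree `p^{m-1}`,
would vanish on the `p^m` elements of the field. -/
lemma exists_chi_ne_one {m : ℕ} (hm : 1 ≤ m) : ∃ x : K, x ^ p ^ m = x ∧ chi p π τ m x ≠ 1 := by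
  classical
  by_contra! hcon
  have h2 := two_le_pow (p := p) hm
  have htr : ∀ x : K, x ^ p ^ m = x → ∑ i ∈ Finset.range m, x ^ p ^ i = 0 := by
    intro x hx
    have hxi : ∀ i, (x ^ p ^ i) ^ p ^ m = x ^ p ^ i := fun i => by rw [pow_right_comm, hx]
    have hτi : ∀ i, τ (x ^ p ^ i) = τ x ^ p ^ i := by
      intro i
      have : ∀ n : ℕ, 1 ≤ n → τ (x ^ n) = τ x ^ n := by
        intro n hn
        induction n, hn using Nat.le_induction with
        | base => simp
        | succ n hn ih =>
          rw [pow_succ, hτ.mul m hm _ _ (by rw [pow_right_comm, hx]) hx, ih, pow_succ]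
      exact this _ (Nat.one_le_pow _ _ hp.out.pos)
    have hsum : ∀ n, (∑ i ∈ Finset.range n, x ^ p ^ i) ^ p ^ m = ∑ i ∈ Finset.range n, x ^ p ^ i ∧
        ‖∑ i ∈ Finset.range n, τ x ^ p ^ i - τ (∑ i ∈ Finset.range n, x ^ p ^ i)‖ < 1 := by
      intro n
      induction n with
      | zero => simp [hτ.zero, hp.out.ne_zero]
      | succ n ih =>
        refine ⟨by rw [Finset.sum_range_succ, add_pow_char_pow, ih.1, hxi], ?_⟩
        have h1 := hτ.add m hm _ _ ih.1 (hxi n)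
        rw [Finset.sum_range_succ, Finset.sum_range_succ]
        rw [hτi] at h1
        have e : ∀ a b c d : L, a + b - c = (a - d) + (d + b - c) := by intros; ring
        rw [e _ _ _ (τ (∑ i ∈ Finset.range n, x ^ p ^ i))]
        exact (IsUltrametricDist.norm_add_le_max _ _).trans_lt (max_lt ih.2 h1)
    obtain ⟨h3, h4⟩ := hsum m
    have h5 := norm_trace_lt_of_psi_eq_one hπ (norm_le_one_of_pow h2 (hτ.pow m hm x hx)) (hcon x hx)
    have h6 : ‖τ (∑ i ∈ Finset.range m, x ^ p ^ i)‖ < 1 := by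
      have e : τ (∑ i ∈ Finset.range m, x ^ p ^ i) = ∑ i ∈ Finset.range m, τ x ^ p ^ i +
        -(∑ i ∈ Finset.range m, τ x ^ p ^ i - τ (∑ i ∈ Finset.range m, x ^ p ^ i)) := by ring
      rw [e]
      refine (IsUltrametricDist.norm_add_le_max _ _).trans_lt (max_lt h5 ?_)
      rwa [norm_neg]
    have h7 : τ (∑ i ∈ Finset.range m, x ^ p ^ i) = 0 := by
      by_contra h0
      rw [norm_eq_one_of_pow h2 (hτ.pow m hm _ h3) h0] at h6
      exact lt_irrefl _ h6
    exact hτ.inj m hm _ _ h3 (zero_pow (by omega)) (by rw [h7, hτ.zero])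
  set P : Polynomial K := ∑ i ∈ Finset.range m, Polynomial.X ^ p ^ i with hP
  have hPdeg : P.natDegree ≤ p ^ (m - 1) := by
    apply Polynomial.natDegree_sum_le_of_forall_le
    intro i hi
    rw [Polynomial.natDegree_X_pow]
    have := Finset.mem_range.mp hi
    exact Nat.pow_le_pow_right hp.out.pos (by omega)
  have hP0 : P = 0 := by
    apply Polynomial.eq_zero_of_natDegree_lt_card_of_eval_eq_zero' P (fq K (p ^ m))
    · intro x hx
      rw [hP, Polynomial.eval_finsetSum]
      simpa using htr x ((mem_fq h2).mp hx)
    · rw [card_fq hm]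
      exact hPdeg.trans_lt (Nat.pow_lt_pow_right hp.out.one_lt (by omega))
  have hc := congrArg (fun P => Polynomial.coeff P 1) hP0
  simp only [hP, Polynomial.finsetSum_coeff, Polynomial.coeff_X_pow, Polynomial.coeff_zero] at hc
  rw [Finset.sum_eq_single_of_mem 0 (Finset.mem_range.mpr hm)] at hc
  · simp at hc
  · intro i _ hi
    rw [if_neg]
    exact (Nat.one_lt_pow hi hp.out.one_lt).ne

include hπ hτ in
/-- Orthogonality of characters. -/
lemma sum_chi_mul [DecidableEq K] {m : ℕ} (hm : 1 ≤ m) {x : K} (hx : x ^ p ^ m = x) :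
    ∑ y ∈ fq K (p ^ m), chi p π τ m (y * x) = if x = 0 then (p : L) ^ m else 0 := by
  have h2 := two_le_pow (p := p) hm
  split_ifs with h0
  · simp [h0, chi_zero hπ hτ, card_fq hm]
  · obtain ⟨c, hc, hc1⟩ := exists_chi_ne_one (K := K) hπ hτ hm
    have hcx : (c / x) ^ p ^ m = c / x := by rw [div_pow, hc, hx]
    have h : ∑ y ∈ fq K (p ^ m), chi p π τ m (y * x) =
        ∑ y ∈ fq K (p ^ m), chi p π τ m (y * x) * chi p π τ m c := by
      symm
      apply Finset.sum_nbij' (fun y => y + c / x) (fun y => y - c / x)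
      · intro y hy
        rw [mem_fq h2] at hy ⊢
        rw [add_pow_char_pow, hy, hcx]
      · intro y hy
        rw [mem_fq h2] at hy ⊢
        rw [sub_pow_char_pow, hy, hcx]
      · intro y _; ring
      · intro y _; ring
      · intro y hy
        rw [mem_fq h2] at hy
        rw [← chi_add hπ hτ hm (by rw [mul_pow, hy, hx]) hc, add_mul, div_mul_cancel₀ _ h0]
    rw [← Finset.sum_mul] at h
    by_contra hne
    exact hc1 (mul_left_cancel₀ hne (by rw [← h, mul_one]))

end FiniteCharacter
end KatzDwork

namespace KatzDwork

/-! ### Exponential sums over tori -/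

section Torus
open MvPolynomial Filter Topology
variable {p : ℕ} [hp : Fact p.Prime]
  {L : Type*} [NormedField L] [NormedAlgebra ℚ_[p] L] [IsUltrametricDist L] [CharZero L]
  [CompleteSpace L]
  {K : Type*} [Field K] [IsAlgClosed K] [CharP K p]
  {π : L} (hπ : π ^ (p - 1) = -(p : L)) {τ : K → L} (hτ : Teich p τ)
  {σ : Type*} [Fintype σ] [DecidableEq σ]
set_option linter.unusedSectionVars false

/-- The coefficient bounds `|coeff u F| ≤ ρ ^ |u|`. -/
def CoeffBd (ρ : ℝ) (F : MvPolynomial σ L) : Prop := ∀ u, ‖coeff u F‖ ≤ ρ ^ u.degree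

lemma CoeffBd.mul {ρ : ℝ} (hρ : 0 ≤ ρ) {F G : MvPolynomial σ L} (hF : CoeffBd ρ F)
    (hG : CoeffBd ρ G) : CoeffBd ρ (F * G) := by
  intro u
  rw [coeff_mul]
  apply IsUltrametricDist.norm_sum_le_of_forall_le_of_nonneg (by positivity)
  intro ij hij
  rw [norm_mul, ← Finset.HasAntidiagonal.mem_antidiagonal.mp hij, map_add, pow_add]
  exact mul_le_mul (hF _) (hG _) (norm_nonneg _) (by positivity)

lemma CoeffBd.one {ρ : ℝ} (hρ : 0 ≤ ρ) : CoeffBd ρ (1 : MvPolynomial σ L) := by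
  intro u
  rw [coeff_one]
  split_ifs with h
  · simp [← h]
  · rw [norm_zero]; positivity

lemma CoeffBd.prod {ι : Type*} {ρ : ℝ} (hρ : 0 ≤ ρ) (s : Finset ι) {F : ι → MvPolynomial σ L}
    (hF : ∀ i ∈ s, CoeffBd ρ (F i)) : CoeffBd ρ (∏ i ∈ s, F i) := by
  classical
  induction s using Finset.induction_on with
  | empty => simpa using CoeffBd.one hρ
  | insert a s ha ih =>
    rw [Finset.prod_insert ha]
    exact CoeffBd.mul hρ (hF a (by simp)) (ih fun i hi => hF i (by simp [hi]))

lemma CoeffBd.sum {ι : Type*} {ρ : ℝ} (hρ : 0 ≤ ρ) (s : Finset ι) {F : ι → MvPolynomial σ L}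
    (hF : ∀ i ∈ s, CoeffBd ρ (F i)) : CoeffBd ρ (∑ i ∈ s, F i) := by
  intro u
  rw [coeff_sum]
  exact IsUltrametricDist.norm_sum_le_of_forall_le_of_nonneg (by positivity) fun i hi => hF i hi u

lemma CoeffBd.monomial {ρ : ℝ} (hρ : 0 ≤ ρ) {v : σ →₀ ℕ} {c : L} (hc : ‖c‖ ≤ ρ ^ v.degree) :
    CoeffBd ρ (monomial v c) := by
  intro u
  rw [coeff_monomial]
  split_ifs with h
  · rw [← h]; exact hc
  · rw [norm_zero]; positivity

variable (p π) in
/-- The truncation of `θ(c X^v)` at degree `N` of `θ`. -/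
noncomputable def thetaTrunc (N : ℕ) (c : L) (v : σ →₀ ℕ) : MvPolynomial σ L :=
  ∑ k ∈ Finset.range N, monomial (k • v) (PowerSeries.coeff k (theta p π) * c ^ k)

lemma eval_thetaTrunc (N : ℕ) (c : L) (v : σ →₀ ℕ) (x : σ → L) :
    eval x (thetaTrunc p π N c v) = ∑ k ∈ Finset.range N,
      PowerSeries.coeff k (theta p π) * (c * ∏ i, x i ^ v i) ^ k := by
  rw [thetaTrunc, map_sum]
  refine Finset.sum_congr rfl fun k _ => ?_
  rw [eval_monomial, Finsupp.prod_fintype _ _ (by simp), mul_pow, ← Finset.prod_pow, mul_assoc]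
  congr 2
  refine Finset.prod_congr rfl fun i _ => ?_
  rw [Finsupp.smul_apply, smul_eq_mul, ← pow_mul, mul_comm]

include hπ in
lemma tendsto_eval_thetaTrunc (c : L) (v : σ →₀ ℕ) (x : σ → L) (h : ‖c * ∏ i, x i ^ v i‖ ≤ 1) :
    Tendsto (fun N => eval x (thetaTrunc p π N c v)) atTop
      (𝓝 (ev (c * ∏ i, x i ^ v i) (theta p π))) := by
  simp_rw [eval_thetaTrunc]
  exact (sumAt_theta hπ h).of_norm.hasSum.tendsto_sum_nat

include hπ in
lemma thetaTrunc_bd {ρ : ℝ} (hρ : 0 < ρ) (hρ1 : ρ ≤ 1) {D : ℕ} (hD : ρ ^ D = (rad p)⁻¹) (N : ℕ)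
    {c : L} (hc : ‖c‖ ≤ 1) {v : σ →₀ ℕ} (hv : v.degree ≤ D) : CoeffBd ρ (thetaTrunc p π N c v) := by
  apply CoeffBd.sum hρ.le
  intro k _
  apply CoeffBd.monomial hρ.le
  have hR := one_lt_rad (p := p)
  have h1 := theta_bdAt hπ k
  rw [← le_div_iff₀ (by positivity)] at h1
  calc _ ≤ ‖PowerSeries.coeff k (theta p π)‖ := by
        rw [norm_mul, norm_pow]
        exact mul_le_of_le_one_right (norm_nonneg _) (pow_le_one₀ (norm_nonneg _) hc)
    _ ≤ (rad p)⁻¹ ^ k := by rwa [inv_pow, ← one_div]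
    _ = ρ ^ (D * k) := by rw [← hD, pow_mul]
    _ ≤ _ := by
      apply pow_le_pow_of_le_one hρ.le hρ1
      rw [map_nsmul, smul_eq_mul, mul_comm]
      exact Nat.mul_le_mul_right k hv

lemma Teich.prod_pow (hτ : Teich p τ) {m : ℕ} (hm : 1 ≤ m) (s : Finset σ) (x : σ → K)
    (hx : ∀ i, x i ^ p ^ m = x i) (u : σ → ℕ) (hone : τ 1 = 1) :
    (∏ i ∈ s, x i ^ u i) ^ p ^ m = ∏ i ∈ s, x i ^ u i ∧
    τ (∏ i ∈ s, x i ^ u i) = ∏ i ∈ s, τ (x i) ^ u i := by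
  have hpow : ∀ (y : K), y ^ p ^ m = y → ∀ n : ℕ, τ (y ^ n) = τ y ^ n := by
    intro y hy n
    induction n with
    | zero => simp [hone]
    | succ n ih => rw [pow_succ, hτ.mul m hm _ _ (by rw [pow_right_comm, hy]) hy, ih, pow_succ]
  induction s using Finset.induction_on with
  | empty => simp [hone]
  | insert a s ha ih =>
    have h1 : (x a ^ u a) ^ p ^ m = x a ^ u a := by rw [pow_right_comm, hx]
    rw [Finset.prod_insert ha, Finset.prod_insert ha, mul_pow, h1, ih.1,
      hτ.mul m hm _ _ h1 ih.1, ih.2, hpow _ (hx a)]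
    exact ⟨rfl, rfl⟩

lemma Teich.map_one (hτ : Teich p τ) : τ 1 = 1 := by
  have h1 : (1 : K) ^ p ^ 1 = 1 := one_pow _
  have h := hτ.mul 1 le_rfl 1 1 h1 h1
  rw [mul_one] at h
  have h0 : τ 1 ≠ 0 := by
    intro h0
    exact one_ne_zero (hτ.inj 1 le_rfl 1 0 h1 (zero_pow (pow_ne_zero _ hp.out.ne_zero))
      (by rw [h0, hτ.zero]))
  exact (mul_left_cancel₀ h0 (by rw [mul_one]; exact h)).symm

/-- Reindexing `range (a * l)` by quotient and remainder. -/
lemma prod_range_mul {M : Type*} [CommMonoid M] (f : ℕ → M) (a l : ℕ) :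
    ∏ i ∈ Finset.range (a * l), f i = ∏ m ∈ Finset.range l, ∏ i ∈ Finset.range a, f (a * m + i) := by
  induction l with
  | zero => simp
  | succ l ih => rw [mul_add, mul_one, Finset.prod_range_add, ih, Finset.prod_range_succ]

variable (p π τ) in
/-- The exponential sum of `f` over the rational points of the torus. -/
noncomputable def torusSum (a : ℕ) (f : MvPolynomial σ K) (l : ℕ) : L :=
  ∑ x ∈ Fintype.piFinset fun _ : σ => Polynomial.nthRootsFinset (p ^ (a * l) - 1) (1 : K),
    chi p π τ (a * l) (eval x f)

include hπ hτ in
/-- The `L`-function of an exponential sum over a torus is `p`-adic meromorphic. -/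
theorem torusSum_mero [IsAlgClosed L] {a : ℕ} (ha : 1 ≤ a) (f : MvPolynomial σ K)
    (hf : ∀ u, coeff u f ^ p ^ a = coeff u f) : Mero (torusSum p π τ a f) := by
  have hR := one_lt_rad (p := p)
  set D := p ^ a * f.totalDegree + 1 with hD
  set ρ : ℝ := ((rad p)⁻¹) ^ ((D : ℝ)⁻¹) with hρdef
  have hRi : 0 < (rad p)⁻¹ := by positivity
  have hρ : 0 < ρ := Real.rpow_pos_of_pos hRi _
  have hρ1 : ρ < 1 := Real.rpow_lt_one hRi.le (inv_lt_one_of_one_lt₀ hR) (by positivity)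
  have hρD : ρ ^ D = (rad p)⁻¹ := Real.rpow_inv_natCast_pow hRi.le (by omega)
  set Φ : ℕ → MvPolynomial σ L := fun N => ∏ u ∈ f.support, ∏ i ∈ Finset.range a,
    thetaTrunc p π N (τ (coeff u f) ^ p ^ i) (p ^ i • u) with hΦ
  have hcn : ∀ u, ‖τ (coeff u f)‖ ≤ 1 := fun u =>
    norm_le_one_of_pow (two_le_pow (p := p) ha) (hτ.pow a ha _ (hf u))
  apply mero_of_tendsto (two_le_pow (p := p) ha) hρ hρ1 Φ
  · intro N
    apply CoeffBd.prod hρ.le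
    intro u hu
    apply CoeffBd.prod hρ.le
    intro i hi
    apply thetaTrunc_bd hπ hρ hρ1.le hρD
    · rw [norm_pow]; exact pow_le_one₀ (norm_nonneg _) (hcn u)
    · rw [map_nsmul, smul_eq_mul, hD]
      have h1 : u.degree ≤ f.totalDegree := le_totalDegree hu
      have h2 : p ^ i ≤ p ^ a := Nat.pow_le_pow_right hp.out.pos (Finset.mem_range.mp hi).le
      exact (Nat.mul_le_mul h2 h1).trans (Nat.le_succ _)
  · intro l hl
    have hal : 1 ≤ a * l := Nat.mul_pos ha hl
    have hQ2 := two_le_pow (p := p) hal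
    have hQpos : 0 < p ^ (a * l) - 1 := by omega
    have hmemK : ∀ {y : K}, y ∈ Polynomial.nthRootsFinset (p ^ (a * l) - 1) (1 : K) →
        y ^ p ^ (a * l) = y := fun hy => (pow_sub_one_of_pow_eq hQ2).mpr
          (Or.inr ((Polynomial.mem_nthRootsFinset hQpos _).mp hy))
    have hτmem : ∀ {y : K}, y ∈ Polynomial.nthRootsFinset (p ^ (a * l) - 1) (1 : K) →
        τ y ∈ Polynomial.nthRootsFinset (p ^ (a * l) - 1) (1 : L) := by
      intro y hy
      rw [Polynomial.mem_nthRootsFinset hQpos]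
      refine ((pow_sub_one_of_pow_eq hQ2).mp (hτ.pow _ hal y (hmemK hy))).resolve_left fun h0 => ?_
      have := hτ.inj _ hal y 0 (hmemK hy) (zero_pow (by omega)) (by rw [h0, hτ.zero])
      exact zero_notMem_nthRootsFinset hQ2 (this ▸ hy)
    -- transport the sum to `L` along the Teichmüller map
    have hsum : torusSum p π τ a f l =
        ∑ x ∈ Fintype.piFinset fun _ : σ => Polynomial.nthRootsFinset ((p ^ a) ^ l - 1) (1 : L),
          ∏ u ∈ f.support, psi p π (a * l) (τ (coeff u f) * ∏ i, x i ^ u i) := by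
      rw [torusSum, ← pow_mul]
      apply Finset.sum_bij (fun x _ i => τ (x i))
      · intro x hx
        rw [Fintype.mem_piFinset] at hx ⊢
        exact fun i => hτmem (hx i)
      · intro x hx y hy hxy
        rw [Fintype.mem_piFinset] at hx hy
        funext i
        exact hτ.inj _ hal _ _ (hmemK (hx i)) (hmemK (hy i)) (congrFun hxy i)
      · intro t ht
        rw [Fintype.mem_piFinset] at ht
        have h1 : ∀ i, ∃ y, y ∈ Polynomial.nthRootsFinset (p ^ (a * l) - 1) (1 : K) ∧ τ y = t i := by
          intro i
          have h2 := (Polynomial.mem_nthRootsFinset hQpos _).mp (ht i)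
          obtain ⟨y, hy, hyt⟩ := hτ.surj _ hal (t i) ((pow_sub_one_of_pow_eq hQ2).mpr (Or.inr h2))
          refine ⟨y, ?_, hyt⟩
          rw [Polynomial.mem_nthRootsFinset hQpos]
          refine ((pow_sub_one_of_pow_eq hQ2).mp hy).resolve_left fun h0 => ?_
          rw [h0, hτ.zero] at hyt
          rw [← hyt, zero_pow (by omega)] at h2
          exact zero_ne_one h2
        choose y hy hyt using h1
        exact ⟨y, Fintype.mem_piFinset.mpr hy, funext hyt⟩
      · intro x hx
        rw [Fintype.mem_piFinset] at hx
        have hc : ∀ u, coeff u f ^ p ^ (a * l) = coeff u f := fun u => by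
          rw [pow_mul]; exact pow_pow_mul (hf u) l
        have hterm := fun u : σ →₀ ℕ => hτ.prod_pow hal Finset.univ x (fun i => hmemK (hx i)) u
          hτ.map_one
        rw [eval_eq', (chi_sum hπ hτ hal _ _ fun u _ => by rw [mul_pow, hc, (hterm u).1]).2]
        refine Finset.prod_congr rfl fun u _ => ?_
        rw [chi, hτ.mul _ hal _ _ (hc u) (hterm u).1, (hterm u).2]
    rw [hsum]
    apply tendsto_finsetSum
    intro x hx
    rw [Fintype.mem_piFinset] at hx
    have hxn : ∀ i, ‖x i‖ ≤ 1 := by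
      intro i
      have h2 := hx i
      rw [← pow_mul] at h2
      exact norm_le_one_of_pow hQ2 ((pow_sub_one_of_pow_eq hQ2).mpr (Or.inr
        ((Polynomial.mem_nthRootsFinset hQpos _).mp h2)))
    have hlim : ∏ u ∈ f.support, psi p π (a * l) (τ (coeff u f) * ∏ i, x i ^ u i) =
        ∏ m ∈ Finset.range l, ∏ u ∈ f.support, ∏ i ∈ Finset.range a,
          ev (τ (coeff u f) ^ p ^ i * ∏ j, (x j ^ (p ^ a) ^ m) ^ (p ^ i • u) j) (theta p π) := by
      rw [Finset.prod_comm]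
      refine Finset.prod_congr rfl fun u _ => ?_
      rw [psi, prod_range_mul]
      refine Finset.prod_congr rfl fun m _ => Finset.prod_congr rfl fun i _ => ?_
      congr 1
      have hC : τ (coeff u f) ^ p ^ (a * m + i) = τ (coeff u f) ^ p ^ i := by
        rw [pow_add, pow_mul p a m, pow_mul, pow_pow_mul (hτ.pow a ha _ (hf u))]
      rw [mul_pow, ← Finset.prod_pow, hC]
      congr 1
      refine Finset.prod_congr rfl fun j _ => ?_
      rw [Finsupp.smul_apply, smul_eq_mul, ← pow_mul, ← pow_mul, ← pow_mul p]
      congr 1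
      ring
    rw [hlim]
    apply tendsto_finsetProd
    intro m _
    simp only [hΦ, map_prod]
    apply tendsto_finsetProd
    intro u _
    apply tendsto_finsetProd
    intro i _
    apply tendsto_eval_thetaTrunc hπ
    rw [norm_mul, norm_pow, norm_prod]
    apply mul_le_one₀ (pow_le_one₀ (norm_nonneg _) (hcn u)) (by positivity)
    apply Finset.prod_le_one (fun _ _ => norm_nonneg _)
    intro j _
    rw [norm_pow, norm_pow]
    exact pow_le_one₀ (by positivity) (pow_le_one₀ (norm_nonneg _) (hxn j))

end Torus
end KatzDwork

namespace KatzDwork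

/-! ### Counting points by exponential sums -/

section Counting
open MvPolynomial
variable {p : ℕ} [hp : Fact p.Prime]
  {L : Type*} [NormedField L] [NormedAlgebra ℚ_[p] L] [IsUltrametricDist L] [CharZero L]
  [CompleteSpace L] [IsAlgClosed L]
  {K : Type*} [Field K] [IsAlgClosed K] [CharP K p] [DecidableEq K]
  {π : L} (hπ : π ^ (p - 1) = -(p : L)) {τ : K → L} (hτ : Teich p τ)
  {σ : Type*} [Fintype σ] [DecidableEq σ]
set_option linter.unusedSectionVars false

variable (p) in
/-- `f` has coefficients in the subfield with `p^a` elements. -/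
def Rat (a : ℕ) {σ : Type*} (f : MvPolynomial σ K) : Prop := map (iterateFrobenius K p a) f = f

lemma rat_iff {a : ℕ} {f : MvPolynomial σ K} : Rat p a f ↔ ∀ u, coeff u f ^ p ^ a = coeff u f := by
  rw [Rat, MvPolynomial.ext_iff]
  simp only [coeff_map, iterateFrobenius_def]

lemma Rat.bind {a : ℕ} {σ' : Type*} {f : MvPolynomial σ K} (hf : Rat p a f)
    {g : σ → MvPolynomial σ' K} (hg : ∀ i, Rat p a (g i)) : Rat p a (bind₁ g f) := by
  rw [Rat, map_bind₁, hf]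
  congr 2
  funext i
  exact hg i

lemma eval_bind {σ' : Type*} (f : MvPolynomial σ K) (g : σ → MvPolynomial σ' K) (x : σ' → K) :
    eval x (bind₁ g f) = eval (fun i => eval x (g i)) f := by
  have := eval₂Hom_bind₁ (RingHom.id K) x g f
  exact this

lemma Rat.eval {a l : ℕ} {f : MvPolynomial σ K} (hf : Rat p a f) {x : σ → K}
    (hx : ∀ i, x i ^ p ^ (a * l) = x i) : eval x f ^ p ^ (a * l) = eval x f := by
  have h1 : map (iterateFrobenius K p (a * l)) f = f := by
    ext u
    rw [coeff_map, iterateFrobenius_def, pow_mul]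
    exact pow_pow_mul (rat_iff.mp hf u) l
  have h2 := eval₂_comp_left (iterateFrobenius K p (a * l)) (RingHom.id K) x f
  rw [← iterateFrobenius_def]
  change iterateFrobenius K p (a * l) (eval₂ (RingHom.id K) x f) = _
  rw [h2, RingHom.comp_id, ← eval_map, h1]
  congr 1
  congr 1
  funext i
  exact hx i

/-- Substituting `0` for the variables outside `I`. -/
noncomputable def restr (I : Finset σ) (f : MvPolynomial σ K) : MvPolynomial {i // i ∈ I} K :=
  bind₁ (fun i => if h : i ∈ I then X ⟨i, h⟩ else 0) f

lemma Rat.restr {a : ℕ} {f : MvPolynomial σ K} (hf : Rat p a f) (I : Finset σ) :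
    Rat p a (restr I f) := by
  apply hf.bind
  intro i
  rw [Rat]
  split_ifs <;> simp

variable (p π τ) in
/-- The exponential sum of `f` over the rational points of affine space. -/
noncomputable def affSum (a : ℕ) (f : MvPolynomial σ K) (l : ℕ) : L :=
  ∑ x ∈ Fintype.piFinset fun _ : σ => fq K (p ^ (a * l)), chi p π τ (a * l) (eval x f)

/-- Affine space is the disjoint union of the coordinate tori. -/
lemma affSum_eq {a l : ℕ} (hal : 1 ≤ a * l) (f : MvPolynomial σ K) :
    affSum p π τ a f l = ∑ I ∈ (Finset.univ : Finset (Finset σ)), torusSum p π τ a (restr I f) l := by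
  have hQ2 := two_le_pow (p := p) hal
  have hz := zero_notMem_nthRootsFinset (K := K) hQ2
  rw [affSum, ← Finset.sum_fiberwise_of_maps_to (s := Fintype.piFinset fun _ : σ =>
    fq K (p ^ (a * l))) (t := Finset.univ) (g := fun x => Finset.univ.filter fun i => x i ≠ 0)
    (fun _ _ => Finset.mem_univ _)]
  refine Finset.sum_congr rfl fun I _ => ?_
  rw [torusSum]
  refine Finset.sum_bij' (fun x _ (i : {i // i ∈ I}) => x i)
    (fun y _ i => if h : i ∈ I then y ⟨i, h⟩ else 0) ?_ ?_ ?_ ?_ ?_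
  · intro x hx
    rw [Finset.mem_filter, Fintype.mem_piFinset] at hx
    rw [Fintype.mem_piFinset]
    rintro ⟨i, hi⟩
    have h1 : x i ≠ 0 := by
      rw [← hx.2] at hi; simpa using hi
    exact (Finset.mem_insert.mp (hx.1 i)).resolve_left h1
  · intro y hy
    rw [Fintype.mem_piFinset] at hy
    rw [Finset.mem_filter, Fintype.mem_piFinset]
    constructor
    · intro i
      rw [fq, Finset.mem_insert]
      split_ifs with h
      · exact Or.inr (hy _)
      · exact Or.inl rfl
    · ext i
      rw [Finset.mem_filter]
      constructor
      · rintro ⟨_, h⟩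
        by_contra hi
        exact h (dif_neg hi)
      · intro hi
        refine ⟨Finset.mem_univ _, ?_⟩
        intro h
        have h' : y ⟨i, hi⟩ = 0 := (dif_pos hi).symm.trans h
        exact hz (h' ▸ hy ⟨i, hi⟩)
  · intro x hx
    rw [Finset.mem_filter] at hx
    funext i
    by_cases h : i ∈ I
    · simp [h]
    · rw [dif_neg h]
      by_contra h0
      exact h (by rw [← hx.2]; simpa using Ne.symm h0)
  · intro y hy
    funext i
    simp
  · intro x hx
    rw [Finset.mem_filter] at hx
    rw [restr, eval_bind]
    congr 3
    funext i
    split_ifs with h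
    · simp
    · rw [map_zero]
      by_contra h0
      exact h (by rw [← hx.2]; simpa using h0)

include hπ hτ in
lemma affSum_mero {a : ℕ} (ha : 1 ≤ a) {f : MvPolynomial σ K} (hf : Rat p a f) :
    Mero (affSum p π τ a f) := by
  have h := Mero.sum (Finset.univ : Finset (Finset σ))
    (fun I => torusSum p π τ a (restr I f)) fun I _ =>
      torusSum_mero hπ hτ ha (restr I f) (rat_iff.mp (hf.restr I))
  exact h.congr fun l hl => (affSum_eq (Nat.mul_pos ha hl) f).symm

variable (L) in
/-- The indicator function of the zero locus of `g`. -/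
noncomputable def ind (g : MvPolynomial σ K) (x : σ → K) : L := if eval x g = 0 then 1 else 0

lemma sum_piFinset_sum {ι κ : Type*} [Fintype ι] [Fintype κ] [DecidableEq ι] [DecidableEq κ]
    (T : Finset K) (F : (ι ⊕ κ → K) → L) :
    ∑ z ∈ Fintype.piFinset (fun _ : ι ⊕ κ => T), F z =
      ∑ x ∈ Fintype.piFinset (fun _ : ι => T), ∑ y ∈ Fintype.piFinset (fun _ : κ => T),
        F (Sum.elim x y) := by
  rw [← Finset.sum_product']
  apply Finset.sum_nbij' (fun z => (fun i => z (Sum.inl i), fun i => z (Sum.inr i)))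
    (fun w => Sum.elim w.1 w.2)
  · intro z hz
    simp only [Finset.mem_product, Fintype.mem_piFinset] at hz ⊢
    exact ⟨fun i => hz _, fun i => hz _⟩
  · intro w hw
    simp only [Finset.mem_product, Fintype.mem_piFinset] at hw ⊢
    rintro (i | i)
    · exact hw.1 i
    · exact hw.2 i
  · intro z _
    funext i
    rcases i with i | i <;> rfl
  · intro w _; rfl
  · intro z _
    congr 1
    funext i
    rcases i with i | i <;> rfl

include hπ hτ in
/-- The number of rational points of the common zero locus of `f 1, …, f r` is, up to the factor
`q^{lr}`, the exponential sum of `∑ y_j f_j(x)`. -/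
lemma count_mero {a : ℕ} (ha : 1 ≤ a) {r : ℕ} (f : Fin r → MvPolynomial σ K)
    (hf : ∀ j, Rat p a (f j)) :
    Mero (fun l => ∑ x ∈ Fintype.piFinset fun _ : σ => fq K (p ^ (a * l)), ∏ j, ind L (f j) x) := by
  have hp0 : (p : L) ≠ 0 := by exact_mod_cast hp.out.ne_zero
  set F : MvPolynomial (σ ⊕ Fin r) K := ∑ j, X (Sum.inr j) * rename Sum.inl (f j) with hF
  have hFr : Rat p a F := by
    rw [Rat, hF, map_sum]
    refine Finset.sum_congr rfl fun j _ => ?_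
    rw [map_mul, map_X, map_rename, hf j]
  have h := (affSum_mero hπ hτ ha hFr).pow_mul (((p : L) ^ (a * r))⁻¹)
  refine h.congr fun l hl => ?_
  have hal : 1 ≤ a * l := Nat.mul_pos ha hl
  have hQ2 := two_le_pow (p := p) hal
  rw [affSum, sum_piFinset_sum, Finset.mul_sum]
  refine Finset.sum_congr rfl fun x hx => ?_
  have hx' : ∀ i, x i ^ p ^ (a * l) = x i := fun i =>
    (mem_fq hQ2).mp (Fintype.mem_piFinset.mp hx i)
  have hfx : ∀ j, eval x (f j) ^ p ^ (a * l) = eval x (f j) := fun j => (hf j).eval hx'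
  have h1 : ∑ y ∈ Fintype.piFinset fun _ : Fin r => fq K (p ^ (a * l)),
      chi p π τ (a * l) (eval (Sum.elim x y) F) =
      ∏ j, ∑ y ∈ fq K (p ^ (a * l)), chi p π τ (a * l) (y * eval x (f j)) := by
    rw [Finset.prod_univ_sum]
    refine Finset.sum_congr rfl fun y hy => ?_
    have hy' : ∀ j, y j ^ p ^ (a * l) = y j := fun j =>
      (mem_fq hQ2).mp (Fintype.mem_piFinset.mp hy j)
    have e : eval (Sum.elim x y) F = ∑ j, y j * eval x (f j) := by
      rw [hF, map_sum]
      refine Finset.sum_congr rfl fun j _ => ?_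
      rw [map_mul, eval_X, eval_rename, Sum.elim_inr, Sum.elim_comp_inl]
    rw [e, (chi_sum hπ hτ hal _ _ fun j _ => by rw [mul_pow, hy', hfx]).2]
  rw [h1]
  simp_rw [fun j => sum_chi_mul hπ hτ hal (hfx j)]
  have h2 : ∀ j, (if eval x (f j) = 0 then (p : L) ^ (a * l) else 0) =
      (p : L) ^ (a * l) * ind L (f j) x := by
    intro j
    rw [ind]
    split_ifs <;> simp
  simp_rw [h2]
  rw [Finset.prod_mul_distrib, Finset.prod_const, Finset.card_univ, Fintype.card_fin, ← mul_assoc,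
    inv_pow, ← pow_mul, ← pow_mul, show a * r * l = a * l * r by ring,
    inv_mul_cancel₀ (pow_ne_zero _ hp0), one_mul]

variable (p) in
/-- The functions whose sums over the rational points of every closed subvariety defined over the
ground field have a meromorphic zeta series. -/
def Good (a : ℕ) (φ : (σ → K) → L) : Prop :=
  ∀ (r : ℕ) (f : Fin r → MvPolynomial σ K), (∀ j, Rat p a (f j)) →
    Mero (fun l => ∑ x ∈ Fintype.piFinset fun _ : σ => fq K (p ^ (a * l)),
      φ x * ∏ j, ind L (f j) x)

variable (p) in
/-- Multipliers of the space of good functions. -/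
def GoodMul (a : ℕ) (ψ : (σ → K) → L) : Prop := ∀ φ : (σ → K) → L, Good p a φ → Good p a (φ * ψ)

lemma Good.sub {a : ℕ} {φ ψ : (σ → K) → L} (hφ : Good p a φ) (hψ : Good p a ψ) :
    Good p a (φ - ψ) := by
  intro r f hf
  refine ((hφ r f hf).sub (hψ r f hf)).congr fun l _ => ?_
  rw [Pi.sub_apply, ← Finset.sum_sub_distrib]
  refine Finset.sum_congr rfl fun x _ => ?_
  rw [Pi.sub_apply, sub_mul]

lemma GoodMul.one {a : ℕ} : GoodMul p a (1 : (σ → K) → L) := fun φ h => by rwa [mul_one]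

lemma GoodMul.mul {a : ℕ} {φ ψ : (σ → K) → L} (hφ : GoodMul p a φ) (hψ : GoodMul p a ψ) :
    GoodMul p a (φ * ψ) := fun χ h => by rw [← mul_assoc]; exact hψ _ (hφ _ h)

lemma GoodMul.sub {a : ℕ} {φ ψ : (σ → K) → L} (hφ : GoodMul p a φ) (hψ : GoodMul p a ψ) :
    GoodMul p a (φ - ψ) := fun χ h => by rw [mul_sub]; exact (hφ _ h).sub (hψ _ h)

lemma GoodMul.prod {a : ℕ} {ι : Type*} (s : Finset ι) {φ : ι → (σ → K) → L}
    (h : ∀ i ∈ s, GoodMul p a (φ i)) : GoodMul p a (∏ i ∈ s, φ i) := by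
  classical
  induction s using Finset.induction_on with
  | empty => simpa using GoodMul.one
  | insert b s hb ih =>
    rw [Finset.prod_insert hb]
    exact (h b (by simp)).mul (ih fun i hi => h i (by simp [hi]))

lemma goodMul_ind {a : ℕ} {g : MvPolynomial σ K} (hg : Rat p a g) : GoodMul p a (ind L g) := by
  intro φ h r f hf
  refine (h (r + 1) (Fin.cons g f) (Fin.cases hg hf)).congr fun l _ => ?_
  refine Finset.sum_congr rfl fun x _ => ?_
  rw [Fin.prod_univ_succ]
  simp only [Fin.cons_zero, Fin.cons_succ, Pi.mul_apply]
  ring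

include hπ hτ in
lemma good_one {a : ℕ} (ha : 1 ≤ a) : Good p a (1 : (σ → K) → L) := by
  intro r f hf
  refine (count_mero hπ hτ ha f hf).congr fun l _ => ?_
  simp

end Counting
end KatzDwork

namespace KatzDwork

/-! ### From point counts to integrality -/

section Final
open MvPolynomial
variable {p : ℕ} [hp : Fact p.Prime]
  {L : Type*} [NormedField L] [NormedAlgebra ℚ_[p] L] [IsUltrametricDist L] [CharZero L]
  [CompleteSpace L] [IsAlgClosed L]
  {K : Type*} [Field K] [IsAlgClosed K] [CharP K p] [DecidableEq K]
  {π : L} (hπ : π ^ (p - 1) = -(p : L)) {τ : K → L} (hτ : Teich p τ)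
  {σ : Type*} [Fintype σ] [DecidableEq σ]
set_option linter.unusedSectionVars false

variable (L) in
/-- The indicator function of a constructible set, obtained from indicator functions of
hypersurfaces by products and differences. -/
noncomputable def indZ {s : ℕ} (S : Fin s → Finset (MvPolynomial σ K))
    (g : Fin s → MvPolynomial σ K) : (σ → K) → L :=
  1 - ∏ a, (1 - (∏ f ∈ S a, ind L f) * (1 - ind L (g a)))

open Classical in
lemma indZ_apply {s : ℕ} (S : Fin s → Finset (MvPolynomial σ K))
    (g : Fin s → MvPolynomial σ K) (x : σ → K) : indZ L S g x =
      if ∃ a, (∀ f ∈ S a, eval x f = 0) ∧ eval x (g a) ≠ 0 then 1 else 0 := by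
  have h1 : ∀ a, (∏ f ∈ S a, ind L f) x = if ∀ f ∈ S a, eval x f = 0 then 1 else 0 := by
    intro a
    rw [Finset.prod_apply]
    simp only [ind]
    split_ifs with h
    · exact Finset.prod_eq_one fun f hf => if_pos (h f hf)
    · push Not at h
      obtain ⟨f, hf, h⟩ := h
      exact Finset.prod_eq_zero hf (if_neg h)
  have h2 : ∀ a, (1 - (∏ f ∈ S a, ind L f) * (1 - ind L (g a))) x =
      if (∀ f ∈ S a, eval x f = 0) ∧ eval x (g a) ≠ 0 then 0 else 1 := by
    intro a
    rw [Pi.sub_apply, Pi.mul_apply, h1, Pi.sub_apply, Pi.one_apply, ind]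
    by_cases h' : eval x (g a) = 0
    · simp [h']
    · by_cases h : ∀ f ∈ S a, eval x f = 0
      · simp only [if_pos h, if_neg h', if_pos (And.intro h h')]
        ring
      · simp only [if_neg h, if_neg fun k : _ ∧ _ => h k.1, zero_mul, sub_zero]
  rw [indZ, Pi.sub_apply, Finset.prod_apply, Pi.one_apply]
  simp_rw [h2]
  split_ifs with h
  · obtain ⟨a, ha⟩ := h
    have h0 := Finset.prod_eq_zero (f := fun a => if (∀ f ∈ S a, eval x f = 0) ∧
      eval x (g a) ≠ 0 then (0 : L) else 1) (Finset.mem_univ a) (if_pos ha)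
    rw [h0, sub_zero]
  · push Not at h
    rw [Finset.prod_eq_one fun a _ => if_neg fun h' => h'.2 (h a h'.1), sub_self]

lemma goodMul_indZ {a s : ℕ} (S : Fin s → Finset (MvPolynomial σ K))
    (g : Fin s → MvPolynomial σ K) (hS : ∀ b, ∀ f ∈ S b, Rat p a f) (hg : ∀ b, Rat p a (g b)) :
    GoodMul p a (indZ L S g) :=
  GoodMul.one.sub <| GoodMul.prod _ fun b _ => GoodMul.one.sub <|
    (GoodMul.prod _ fun f hf => goodMul_ind (hS b f hf)).mul <|
      GoodMul.one.sub (goodMul_ind (hg b))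

include hπ hτ in
/-- The zeta function of a constructible set is `p`-adic meromorphic (Dwork). -/
lemma card_mero {a s : ℕ} (ha : 1 ≤ a) (S : Fin s → Finset (MvPolynomial σ K))
    (g : Fin s → MvPolynomial σ K) (hS : ∀ b, ∀ f ∈ S b, Rat p a f) (hg : ∀ b, Rat p a (g b)) :
    Mero (fun l => (Nat.card {x : σ → K //
      (∃ b, (∀ f ∈ S b, eval x f = 0) ∧ eval x (g b) ≠ 0) ∧
        ∀ i, x i ^ p ^ (a * l) = x i} : L)) := by
  classical
  have h := goodMul_indZ S g hS hg 1 (good_one hπ hτ ha) 0 Fin.elim0 (fun j => j.elim0)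
  refine h.congr fun l hl => ?_
  have hQ2 := two_le_pow (p := p) (Nat.mul_pos ha hl)
  simp only [one_mul, Finset.univ_eq_empty, Finset.prod_empty, mul_one]
  simp_rw [indZ_apply]
  rw [Finset.sum_boole]
  congr 1
  symm
  apply Nat.subtype_card
  intro x
  rw [Finset.mem_filter, Fintype.mem_piFinset, and_comm]
  simp only [mem_fq hQ2]

end Final

open Polynomial in
/-- A complex polynomial with natural number values at the powers of `q` is rational, by
interpolation. -/
lemma exists_rat {q : ℕ} (hq : 2 ≤ q) (P : Polynomial ℂ) (N : ℕ → ℕ)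
    (hP : ∀ l : ℕ, 1 ≤ l → (N l : ℂ) = P.eval ((q : ℂ) ^ l)) :
    ∃ R : Polynomial ℚ, P = R.map (algebraMap ℚ ℂ) := by
  set I := Finset.range (P.natDegree + 1)
  have hinj : Set.InjOn (fun i : ℕ => (q : ℚ) ^ (i + 1)) (I : Set ℕ) := by
    intro i _ j _ h
    dsimp only at h
    have h' : q ^ (i + 1) = q ^ (j + 1) := by exact_mod_cast h
    have := Nat.pow_right_injective hq h'
    omega
  have hinj' : Set.InjOn (fun i : ℕ => (q : ℂ) ^ (i + 1)) (I : Set ℕ) := by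
    intro i _ j _ h
    dsimp only at h
    have h' : q ^ (i + 1) = q ^ (j + 1) := by exact_mod_cast h
    have := Nat.pow_right_injective hq h'
    omega
  refine ⟨Lagrange.interpolate I (fun i : ℕ => (q : ℚ) ^ (i + 1)) (fun i => (N (i + 1) : ℚ)), ?_⟩
  refine Polynomial.eq_of_degrees_lt_of_eval_index_eq I hinj' ?_ ?_ ?_
  · rw [Finset.card_range]
    exact lt_of_le_of_lt degree_le_natDegree (by exact_mod_cast Nat.lt_succ_self _)
  · rw [degree_map]
    exact Lagrange.degree_interpolate_lt _ hinj
  · intro i hi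
    have h1 := Lagrange.eval_interpolate_at_node (fun i => (N (i + 1) : ℚ)) hinj hi
    have h2 := congrArg (algebraMap ℚ ℂ) h1
    rw [← Polynomial.eval₂_at_apply, ← Polynomial.eval_map] at h2
    rw [← hP _ (by omega)]
    simpa using h2.symm

/-- If the values at the powers of `q` form a sequence with meromorphic zeta series, the
coefficients are integers. -/
lemma exists_int_poly {p : ℕ} [Fact p.Prime]
    {L : Type*} [NormedField L] [NormedAlgebra ℚ_[p] L] [IsUltrametricDist L] [CharZero L]
    [CompleteSpace L] [IsAlgClosed L] {q : ℕ} (hq : 2 ≤ q) (P : Polynomial ℂ) (N : ℕ → ℕ)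
    (hP : ∀ l : ℕ, 1 ≤ l → (N l : ℂ) = P.eval ((q : ℂ) ^ l))
    (hN : Mero (fun l => (N l : L))) :
    ∃ Q : Polynomial ℤ, P = Q.map (Int.castRingHom ℂ) := by
  obtain ⟨R, rfl⟩ := exists_rat hq P N hP
  have hR : ∀ l, 1 ≤ l → (N l : ℚ) = R.eval ((q : ℚ) ^ l) := by
    intro l hl
    have h := hP l hl
    have e : (q : ℂ) ^ l = algebraMap ℚ ℂ ((q : ℚ) ^ l) := by simp
    rw [e, Polynomial.eval_map, Polynomial.eval₂_at_apply] at h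
    apply (algebraMap ℚ ℂ).injective
    rw [← h]; simp
  have hM : Mero (fun l => ∑ i ∈ R.support, ((R.coeff i : ℚ) : L) * ((q : L) ^ i) ^ l) := by
    refine hN.congr fun l hl => ?_
    have h := congrArg (Rat.cast : ℚ → L) (hR l hl)
    rw [Polynomial.eval_eq_sum, Polynomial.sum] at h
    push_cast at h
    rw [h]
    refine Finset.sum_congr rfl fun i _ => ?_
    rw [← pow_mul, ← pow_mul, mul_comm l]
  have hI := hM.exists_int R.support _ _
    (fun i _ => pow_ne_zero _ (by exact_mod_cast (by omega : q ≠ 0))) (by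
      intro i _ j _ h
      have h' : q ^ i = q ^ j := by exact_mod_cast h
      exact Nat.pow_right_injective hq h')
  have hc : R ∈ Polynomial.lifts (Int.castRingHom ℚ) := by
    rw [Polynomial.lifts_iff_coeff_lifts]
    intro i
    by_cases hi : i ∈ R.support
    · obtain ⟨m, hm⟩ := hI i hi
      exact ⟨m, by simpa using (show ((m : ℚ)) = R.coeff i by exact_mod_cast hm.symm)⟩
    · exact ⟨0, by simpa using (Polynomial.notMem_support_iff.mp hi).symm⟩
  obtain ⟨Q, hQ⟩ := (Polynomial.mem_lifts _).mp hc
  refine ⟨Q, ?_⟩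
  rw [← hQ, Polynomial.map_map]
  congr 1

end KatzDwork

/-- **Katz's lemma.** -/
theorem katz_polynomial_count_integrality
    (q : ℕ) (K : Type) [Field K] [IsAlgClosed K]
    (hq : ∃ (pr e : ℕ), pr.Prime ∧ 0 < e ∧ q = pr ^ e ∧ CharP K pr)
    (n : ℕ) (Z : Set (Fin n → K))
    (hZ : ∃ (s : ℕ) (S : Fin s → Finset (MvPolynomial (Fin n) K))
        (g : Fin s → MvPolynomial (Fin n) K),
      (∀ a, ∀ f ∈ S a, ∀ m : Fin n →₀ ℕ,
        (MvPolynomial.coeff m f) ^ q = MvPolynomial.coeff m f) ∧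
      (∀ a, ∀ m : Fin n →₀ ℕ,
        (MvPolynomial.coeff m (g a)) ^ q = MvPolynomial.coeff m (g a)) ∧
      Z = ⋃ a : Fin s,
        {x | (∀ f ∈ S a, MvPolynomial.eval x f = 0) ∧ MvPolynomial.eval x (g a) ≠ 0})
    (P : Polynomial ℂ)
    (hP : ∀ l : ℕ, 1 ≤ l →
      (Nat.card {x : Fin n → K // x ∈ Z ∧ ∀ i, (x i) ^ (q ^ l) = x i} : ℂ) =
        P.eval ((q : ℂ) ^ l)) :
    ∃ Q : Polynomial ℤ, P = Q.map (Int.castRingHom ℂ) := by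
  classical
  obtain ⟨p, a, hp, ha, rfl, hK⟩ := hq
  have : Fact p.Prime := ⟨hp⟩
  obtain ⟨s, S, g, hS, hg, rfl⟩ := hZ
  obtain ⟨π, hπ⟩ := IsAlgClosed.exists_pow_nat_eq (-(p : ℂ_[p]))
    (Nat.sub_pos_of_lt hp.one_lt)
  obtain ⟨τ, hτ⟩ := KatzDwork.exists_teich p ℂ_[p] K
  refine KatzDwork.exists_int_poly (p := p) (L := ℂ_[p]) (KatzDwork.two_le_pow ha) P _ (by exact_mod_cast hP) ?_
  refine (KatzDwork.card_mero hπ hτ ha S g (fun b f hf => KatzDwork.rat_iff.mpr (hS b f hf))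
    fun b => KatzDwork.rat_iff.mpr (hg b)).congr fun l _ => ?_
  simp only [Set.mem_iUnion, Set.mem_ofPred_eq, pow_mul]
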